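/- arXiv:2308.08462 — 6 statements merged into one kernel-verified Lean document; each statement's English description precedes it below -/
import Mathlib

section
/- Fix an integer range R ≥ 1 and parameters β, ε ∈ (0,1). There exists J_* > 0, depending only on R, β, ε (and not on N), such that for every 0 < J ≤ J_*, every N ≥ 1 and every fiducial site i_*, there exist, measurably in the disorder h ∈ [0,1]^N, an operator O on ℋ_N and a natural number ℓ such that: ‖J_E − i[H, O]‖ ≤ exp(−((1−β)/4)·(log(1/J))^{2−ε}); ‖O‖ ≤ J^{(1−β)/(8R)} + 2ℓ; and for every ℓ₀ ≥ 1, Prob(ℓ ≥ ℓ₀) ≤ exp(−c₀·(log(1/J))^ε·ℓ₀), where c₀ = 10^{−3}·β/R. -/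
open MeasureTheory

/-- Observables on the spin chain of length `N`: matrices indexed by spin configurations. -/
abbrev SpinOp (N : ℕ) := Matrix (Fin N → Bool) (Fin N → Bool) ℂ

/-- The ℓ² → ℓ² operator norm of a complex square matrix. -/
noncomputable def opNorm {ι : Type*} [Fintype ι] [DecidableEq ι] (A : Matrix ι ι ℂ) : ℝ :=
  ‖Matrix.toEuclideanCLM (𝕜 := ℂ) A‖

/-- `A` is supported on the set of sites `S`: matrix elements vanish between configurations
differing outside `S` and depend only on the restrictions to `S`. -/
def SupportedOn {N : ℕ} (A : SpinOp N) (S : Set (Fin N)) : Prop :=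
  (∀ σ σ' : Fin N → Bool, (∃ j, j ∉ S ∧ σ j ≠ σ' j) → A σ σ' = 0) ∧
  (∀ σ σ' τ τ' : Fin N → Bool,
    (∀ j ∈ S, σ j = τ j) → (∀ j ∈ S, σ' j = τ' j) →
    (∀ j, j ∉ S → σ j = σ' j) → (∀ j, j ∉ S → τ j = τ' j) → A σ σ' = A τ τ')

/-- The Pauli-Z operator at site `i`. -/
noncomputable def PauliZ {N : ℕ} (i : Fin N) : SpinOp N :=
  Matrix.diagonal fun σ => if σ i then 1 else -1

/-- The disordered chain Hamiltonian `H = Σ_i (h_i Z_i + J V_i)`. -/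
noncomputable def Ham (N : ℕ) (J : ℝ) (h : Fin N → ℝ) (V : Fin N → SpinOp N) : SpinOp N :=
  ∑ i : Fin N, (h i • PauliZ i + J • V i)

/-- The left Hamiltonian `H_L = Σ_{i ≤ i_*} (h_i Z_i + J V_i)` for a fiducial site `i_*`. -/
noncomputable def HamL (N : ℕ) (J : ℝ) (h : Fin N → ℝ) (V : Fin N → SpinOp N)
    (istar : Fin N) : SpinOp N :=
  ∑ i ∈ Finset.univ.filter fun i : Fin N => i ≤ istar, (h i • PauliZ i + J • V i)

/-- The energy current `J_E = i[H, H_L]` through the fiducial site. -/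
noncomputable def current (N : ℕ) (J : ℝ) (h : Fin N → ℝ) (V : Fin N → SpinOp N)
    (istar : Fin N) : SpinOp N :=
  Complex.I • (Ham N J h V * HamL N J h V istar - HamL N J h V istar * Ham N J h V)

/-- The disorder measure: i.i.d. uniform fields on `[0,1]`. -/
noncomputable def disorderMeasure (N : ℕ) : Measure (Fin N → ℝ) :=
  Measure.pi fun _ => volume.restrict (Set.Icc (0 : ℝ) 1)

section SchurTest

variable {ι : Type*} [Fintype ι]

/-- All row sums and all column sums of absolute values of entries of `A` are at most `r`. -/
def SchurBound (A : Matrix ι ι ℂ) (r : ℝ) : Prop :=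
  (∀ i, ∑ j, ‖A i j‖ ≤ r) ∧ ∀ j, ∑ i, ‖A i j‖ ≤ r

namespace SchurBound

variable {A B : Matrix ι ι ℂ} {r s : ℝ}

theorem mono (hA : SchurBound A r) (h : r ≤ s) : SchurBound A s :=
  ⟨fun i => (hA.1 i).trans h, fun j => (hA.2 j).trans h⟩

theorem zero : SchurBound (0 : Matrix ι ι ℂ) 0 := by
  constructor <;> simp

theorem of_norm_le (hA : SchurBound A r) (hs : 0 ≤ s)
    (h : ∀ i j, ‖B i j‖ ≤ s * ‖A i j‖) : SchurBound B (s * r) := by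
  constructor
  · intro i
    calc ∑ j, ‖B i j‖ ≤ ∑ j, s * ‖A i j‖ := Finset.sum_le_sum fun j _ => h i j
      _ = s * ∑ j, ‖A i j‖ := by rw [Finset.mul_sum]
      _ ≤ s * r := by gcongr; exact hA.1 i
  · intro j
    calc ∑ i, ‖B i j‖ ≤ ∑ i, s * ‖A i j‖ := Finset.sum_le_sum fun i _ => h i j
      _ = s * ∑ i, ‖A i j‖ := by rw [Finset.mul_sum]
      _ ≤ s * r := by gcongr; exact hA.2 j

theorem add (hA : SchurBound A r) (hB : SchurBound B s) : SchurBound (A + B) (r + s) := by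
  constructor
  · intro i
    calc ∑ j, ‖(A + B) i j‖ ≤ ∑ j, (‖A i j‖ + ‖B i j‖) :=
          Finset.sum_le_sum fun j _ => norm_add_le _ _
      _ ≤ r + s := by rw [Finset.sum_add_distrib]; exact add_le_add (hA.1 i) (hB.1 i)
  · intro j
    calc ∑ i, ‖(A + B) i j‖ ≤ ∑ i, (‖A i j‖ + ‖B i j‖) :=
          Finset.sum_le_sum fun i _ => norm_add_le _ _
      _ ≤ r + s := by rw [Finset.sum_add_distrib]; exact add_le_add (hA.2 j) (hB.2 j)

theorem neg (hA : SchurBound A r) : SchurBound (-A) r := by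
  simpa [SchurBound] using hA

theorem sub (hA : SchurBound A r) (hB : SchurBound B s) : SchurBound (A - B) (r + s) := by
  rw [sub_eq_add_neg]; exact hA.add hB.neg

theorem smul (hA : SchurBound A r) (c : ℝ) : SchurBound (c • A) (|c| * r) :=
  hA.of_norm_le (abs_nonneg c) fun i j => by
    rw [Matrix.smul_apply, norm_smul, Real.norm_eq_abs]

theorem sum {κ : Type*} (t : Finset κ) {A : κ → Matrix ι ι ℂ} {r : κ → ℝ}
    (h : ∀ k ∈ t, SchurBound (A k) (r k)) : SchurBound (∑ k ∈ t, A k) (∑ k ∈ t, r k) := by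
  classical
  induction t using Finset.induction_on with
  | empty => simpa using zero
  | insert a t ha ih =>
    rw [Finset.sum_insert ha, Finset.sum_insert ha]
    exact (h a (Finset.mem_insert_self a t)).add
      (ih fun k hk => h k (Finset.mem_insert_of_mem hk))

theorem transpose (hA : SchurBound A r) : SchurBound A.transpose r := ⟨hA.2, hA.1⟩

theorem row_sum_mul_le (hA : SchurBound A r) (hB : SchurBound B s) (hs : 0 ≤ s) (i : ι) :
    ∑ j, ‖(A * B) i j‖ ≤ r * s := by
  calc ∑ j, ‖(A * B) i j‖ ≤ ∑ j, ∑ k, ‖A i k‖ * ‖B k j‖ := by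
        refine Finset.sum_le_sum fun j _ => ?_
        rw [Matrix.mul_apply]
        exact (norm_sum_le _ _).trans (Finset.sum_le_sum fun k _ => norm_mul_le _ _)
    _ = ∑ k, ‖A i k‖ * ∑ j, ‖B k j‖ := by
        rw [Finset.sum_comm]; simp_rw [Finset.mul_sum]
    _ ≤ ∑ k, ‖A i k‖ * s := by gcongr with k; exact hB.1 k
    _ = (∑ k, ‖A i k‖) * s := by rw [Finset.sum_mul]
    _ ≤ r * s := by gcongr; exact hA.1 i

theorem mul (hA : SchurBound A r) (hB : SchurBound B s) (hr : 0 ≤ r) (hs : 0 ≤ s) :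
    SchurBound (A * B) (r * s) := by
  refine ⟨hA.row_sum_mul_le hB hs, fun j => ?_⟩
  have := hB.transpose.row_sum_mul_le hA.transpose hr j
  rw [← Matrix.transpose_mul, mul_comm] at this
  exact this

theorem lie (hA : SchurBound A r) (hB : SchurBound B s) (hr : 0 ≤ r) (hs : 0 ≤ s) :
    SchurBound ⁅A, B⁆ (2 * r * s) := by
  rw [Ring.lie_def]
  exact ((hA.mul hB hr hs).sub (hB.mul hA hs hr)).mono (le_of_eq (by ring))

theorem diagonal [DecidableEq ι] {d : ι → ℂ} (h : ∀ i, ‖d i‖ ≤ r) :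
    SchurBound (Matrix.diagonal d) r := by
  constructor
  · intro i
    rw [Finset.sum_eq_single i (fun j _ hj => by simp [Matrix.diagonal_apply_ne _ hj.symm])
      (by simp)]
    simpa using h i
  · intro j
    rw [Finset.sum_eq_single j (fun i _ hi => by simp [Matrix.diagonal_apply_ne _ hi])
      (by simp)]
    simpa using h j

/-- The Schur test. -/
theorem opNorm_le [DecidableEq ι] (hA : SchurBound A r) (hr : 0 ≤ r) : opNorm A ≤ r := by
  refine ContinuousLinearMap.opNorm_le_bound _ hr fun x => ?_
  refine le_of_sq_le_sq ?_ (by positivity)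
  rw [mul_pow, EuclideanSpace.norm_sq_eq, EuclideanSpace.norm_sq_eq]
  have key : ∀ i, ‖(Matrix.toEuclideanCLM (𝕜 := ℂ) A x) i‖ ^ 2
      ≤ r * ∑ j, ‖A i j‖ * ‖x j‖ ^ 2 := by
    intro i
    have h1 : ‖(Matrix.toEuclideanCLM (𝕜 := ℂ) A x) i‖ ≤ ∑ j, ‖A i j‖ * ‖x j‖ := by
      rw [Matrix.ofLp_toEuclideanCLM, Matrix.mulVec, dotProduct]
      exact (norm_sum_le _ _).trans (Finset.sum_le_sum fun k _ => norm_mul_le _ _)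
    have h2 : (∑ j, ‖A i j‖ * ‖x j‖) ^ 2
        ≤ (∑ j, ‖A i j‖) * ∑ j, ‖A i j‖ * ‖x j‖ ^ 2 :=
      Finset.sum_sq_le_sum_mul_sum_of_sq_le_mul _ (fun _ _ => norm_nonneg _)
        (fun _ _ => by positivity) (fun _ _ => le_of_eq (by ring))
    calc _ ≤ (∑ j, ‖A i j‖ * ‖x j‖) ^ 2 := by gcongr
      _ ≤ _ := h2
      _ ≤ _ := by
        gcongr
        exact hA.1 i
  calc _ ≤ ∑ i, r * ∑ j, ‖A i j‖ * ‖x j‖ ^ 2 := Finset.sum_le_sum fun i _ => key i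
    _ = r * ∑ j, (∑ i, ‖A i j‖) * ‖x j‖ ^ 2 := by
      rw [← Finset.mul_sum, Finset.sum_comm]; simp_rw [Finset.sum_mul]
    _ ≤ r * ∑ j, r * ‖x j‖ ^ 2 := by
      gcongr with j
      exact hA.2 j
    _ = r ^ 2 * ∑ j, ‖x j‖ ^ 2 := by rw [← Finset.mul_sum]; ring

end SchurBound

theorem opNorm_nonneg [DecidableEq ι] (A : Matrix ι ι ℂ) : 0 ≤ opNorm A := norm_nonneg _

theorem opNorm_add_le [DecidableEq ι] (A B : Matrix ι ι ℂ) :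
    opNorm (A + B) ≤ opNorm A + opNorm B := by
  unfold opNorm; rw [map_add]; exact norm_add_le _ _

theorem opNorm_sum_le [DecidableEq ι] {κ : Type*} (t : Finset κ) (A : κ → Matrix ι ι ℂ) :
    opNorm (∑ k ∈ t, A k) ≤ ∑ k ∈ t, opNorm (A k) := by
  unfold opNorm; rw [map_sum]; exact norm_sum_le _ _

theorem opNorm_smul_complex [DecidableEq ι] (c : ℂ) (A : Matrix ι ι ℂ) :
    opNorm (c • A) = ‖c‖ * opNorm A := by
  unfold opNorm; rw [map_smul, norm_smul]

theorem opNorm_smul_real [DecidableEq ι] (c : ℝ) (A : Matrix ι ι ℂ) :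
    opNorm (c • A) = |c| * opNorm A := by
  have : c • A = (c : ℂ) • A := by ext; simp
  rw [this, opNorm_smul_complex, Complex.norm_real, Real.norm_eq_abs]

theorem norm_apply_le_opNorm [DecidableEq ι] (A : Matrix ι ι ℂ) (i j : ι) :
    ‖A i j‖ ≤ opNorm A := by
  have h := (Matrix.toEuclideanCLM (𝕜 := ℂ) A).le_opNorm (EuclideanSpace.single j 1)
  rw [PiLp.norm_single, norm_one, mul_one] at h
  refine le_trans ?_ ((PiLp.norm_apply_le _ i).trans h)
  rw [Matrix.ofLp_toEuclideanCLM]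
  simp

end SchurTest

namespace SupportedOn

variable {N : ℕ} {A B : SpinOp N} {S T : Set (Fin N)}

theorem zero (S : Set (Fin N)) : SupportedOn (0 : SpinOp N) S :=
  ⟨fun _ _ _ => rfl, fun _ _ _ _ _ _ _ _ => rfl⟩

theorem mono (hA : SupportedOn A S) (h : S ⊆ T) : SupportedOn A T := by
  classical
  refine ⟨fun σ σ' ⟨j, hj, hne⟩ => hA.1 σ σ' ⟨j, fun hS => hj (h hS), hne⟩, ?_⟩
  intro σ σ' τ τ' h1 h2 h3 h4
  by_cases hd : ∃ j, j ∉ S ∧ σ j ≠ σ' j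
  · rw [hA.1 σ σ' hd]
    obtain ⟨j, hj, hne⟩ := hd
    refine (hA.1 τ τ' ⟨j, hj, ?_⟩).symm
    by_cases hT : j ∈ T
    · rwa [← h1 j hT, ← h2 j hT]
    · exact absurd (h3 j hT) hne
  · push Not at hd
    refine hA.2 σ σ' τ τ' (fun j hj => h1 j (h hj)) (fun j hj => h2 j (h hj)) hd fun j hj => ?_
    by_cases hT : j ∈ T
    · rw [← h1 j hT, ← h2 j hT]; exact hd j hj
    · exact h4 j hT

theorem add (hA : SupportedOn A S) (hB : SupportedOn B S) : SupportedOn (A + B) S :=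
  ⟨fun σ σ' h => by rw [Matrix.add_apply, hA.1 σ σ' h, hB.1 σ σ' h, add_zero],
   fun σ σ' τ τ' h1 h2 h3 h4 => by
    rw [Matrix.add_apply, Matrix.add_apply, hA.2 σ σ' τ τ' h1 h2 h3 h4,
      hB.2 σ σ' τ τ' h1 h2 h3 h4]⟩

theorem neg (hA : SupportedOn A S) : SupportedOn (-A) S :=
  ⟨fun σ σ' h => by rw [Matrix.neg_apply, hA.1 σ σ' h, neg_zero],
   fun σ σ' τ τ' h1 h2 h3 h4 => by
    rw [Matrix.neg_apply, Matrix.neg_apply, hA.2 σ σ' τ τ' h1 h2 h3 h4]⟩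

theorem sub (hA : SupportedOn A S) (hB : SupportedOn B S) : SupportedOn (A - B) S := by
  rw [sub_eq_add_neg]; exact hA.add hB.neg

theorem smul (hA : SupportedOn A S) (c : ℝ) : SupportedOn (c • A) S :=
  ⟨fun σ σ' h => by rw [Matrix.smul_apply, hA.1 σ σ' h, smul_zero],
   fun σ σ' τ τ' h1 h2 h3 h4 => by
    rw [Matrix.smul_apply, Matrix.smul_apply, hA.2 σ σ' τ τ' h1 h2 h3 h4]⟩

theorem sum {κ : Type*} (t : Finset κ) {A : κ → SpinOp N}
    (h : ∀ k ∈ t, SupportedOn (A k) S) : SupportedOn (∑ k ∈ t, A k) S :=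
  Finset.sum_induction A (fun A => SupportedOn A S) (fun _ _ => add) (zero S) h

theorem mul (hA : SupportedOn A S) (hB : SupportedOn B S) : SupportedOn (A * B) S := by
  classical
  constructor
  · rintro σ σ' ⟨j, hj, hne⟩
    rw [Matrix.mul_apply]
    refine Finset.sum_eq_zero fun τ _ => ?_
    by_cases h : σ j = τ j
    · rw [hB.1 τ σ' ⟨j, hj, h ▸ hne⟩, mul_zero]
    · rw [hA.1 σ τ ⟨j, hj, h⟩, zero_mul]
  · intro σ σ' ρ ρ' h1 h2 h3 h4
    let e : (Fin N → Bool) → (Fin N → Bool) := fun τ j =>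
      if j ∈ S then τ j else xor (τ j) (xor (σ j) (ρ j))
    have he : Function.Involutive e := by
      intro τ; funext j
      by_cases hj : j ∈ S
      · simp [e, hj]
      · simp only [e, hj, if_false]
        cases τ j <;> cases σ j <;> cases ρ j <;> rfl
    rw [Matrix.mul_apply, Matrix.mul_apply]
    refine Fintype.sum_equiv he.toPerm _ _ fun τ => ?_
    change A σ τ * B τ σ' = A ρ (e τ) * B (e τ) ρ'
    by_cases hd : ∃ j, j ∉ S ∧ σ j ≠ τ j
    · rw [hA.1 σ τ hd]
      obtain ⟨j, hj, hne⟩ := hd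
      rw [hA.1 ρ (e τ) ⟨j, hj, ?_⟩, zero_mul, zero_mul]
      simp only [e, hj, if_false]
      revert hne
      cases τ j <;> cases σ j <;> cases ρ j <;> simp
    · push Not at hd
      have h5 : ∀ j, j ∉ S → ρ j = e τ j := by
        intro j hj
        simp only [e, hj, if_false, ← hd j hj]
        cases σ j <;> cases ρ j <;> rfl
      have h6 : ∀ j ∈ S, τ j = e τ j := fun j hj => by simp [e, hj]
      rw [hA.2 σ τ ρ (e τ) h1 h6 hd h5, hB.2 τ σ' (e τ) ρ' h6 h2
        (fun j hj => (hd j hj).symm.trans (h3 j hj))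
        (fun j hj => (h5 j hj).symm.trans (h4 j hj))]

theorem lie (hA : SupportedOn A S) (hB : SupportedOn B S) : SupportedOn ⁅A, B⁆ S := by
  rw [Ring.lie_def]; exact (hA.mul hB).sub (hB.mul hA)

/-- The only intermediate configuration contributing to a product of operators with disjoint
supports. -/
theorem mul_apply_of_disjoint [DecidablePred (· ∈ S)] (hA : SupportedOn A S)
    (hB : SupportedOn B T) (h : Disjoint S T) (σ σ' : Fin N → Bool) :
    (A * B) σ σ' = A σ (fun j => if j ∈ S then σ' j else σ j) *
      B (fun j => if j ∈ S then σ' j else σ j) σ' := by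
  rw [Matrix.mul_apply]
  refine Finset.sum_eq_single _ (fun τ _ hτ => ?_) (by simp)
  obtain ⟨j, hj⟩ := Function.ne_iff.mp hτ
  by_cases hS : j ∈ S
  · rw [if_pos hS] at hj
    rw [hB.1 τ σ' ⟨j, fun hT => Set.disjoint_left.mp h hS hT, hj⟩, mul_zero]
  · rw [if_neg hS] at hj
    rw [hA.1 σ τ ⟨j, hS, fun h => hj h.symm⟩, zero_mul]

theorem lie_eq_zero (hA : SupportedOn A S) (hB : SupportedOn B T) (h : Disjoint S T) :
    ⁅A, B⁆ = 0 := by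
  classical
  rw [Ring.lie_def, sub_eq_zero]
  ext σ σ'
  rw [hA.mul_apply_of_disjoint hB h, hB.mul_apply_of_disjoint hA h.symm, mul_comm]
  by_cases hd : ∃ j, j ∉ S ∧ j ∉ T ∧ σ j ≠ σ' j
  · obtain ⟨j, hS, hT, hne⟩ := hd
    rw [hB.1 _ _ ⟨j, hT, by rwa [if_neg hS]⟩, hA.1 _ σ' ⟨j, hS, by rwa [if_neg hT]⟩]
    simp
  · push Not at hd
    have hST : ∀ j ∈ S, j ∉ T := fun j hS hT => Set.disjoint_left.mp h hS hT
    congr 1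
    · refine hB.2 _ _ _ _ ?_ ?_ ?_ ?_
      · intro j hT; rw [if_neg fun hS => hST j hS hT]
      · intro j hT; rw [if_pos hT]
      · intro j hT; split_ifs with hS
        · rfl
        · exact hd j hS hT
      · intro j hT; rw [if_neg hT]
    · refine hA.2 _ _ _ _ ?_ ?_ ?_ ?_
      · intro j hS; rw [if_neg (hST j hS)]
      · intro j hS; rw [if_pos hS]
      · intro j hS; rw [if_neg hS]
      · intro j hS; split_ifs with hT
        · rfl
        · exact hd j hS hT

theorem pauliZ {i : Fin N} (hi : i ∈ S) : SupportedOn (PauliZ i) S := by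
  constructor
  · rintro σ σ' ⟨j, _, hne⟩
    exact Matrix.diagonal_apply_ne _ fun h => hne (congrFun h j)
  · intro σ σ' τ τ' h1 h2 h3 h4
    by_cases h : σ = σ'
    · have h' : τ = τ' := by
        funext j
        by_cases hj : j ∈ S
        · rw [← h1 j hj, ← h2 j hj, h]
        · exact h4 j hj
      subst h h'
      simp [PauliZ, h1 i hi]
    · have h' : τ ≠ τ' := by
        rintro rfl
        refine h (funext fun j => ?_)
        by_cases hj : j ∈ S
        · rw [h1 j hj, h2 j hj]
        · exact h3 j hj
      rw [PauliZ, Matrix.diagonal_apply_ne _ h, Matrix.diagonal_apply_ne _ h']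

/-- An operator of norm at most one acting on few sites has small row and column sums. -/
theorem schurBound (hA : SupportedOn A S) (hA1 : opNorm A ≤ 1) {R : ℕ} (hS : S.ncard ≤ R) :
    SchurBound A (2 ^ R) := by
  classical
  have hcard : ∀ σ : Fin N → Bool,
      ((Finset.univ.filter fun τ : Fin N → Bool => ∀ j, j ∉ S → σ j = τ j).card : ℝ)
        ≤ 2 ^ R := by
    intro σ
    have h1 : (Finset.univ.filter fun τ : Fin N → Bool => ∀ j, j ∉ S → σ j = τ j).card
        ≤ (Finset.univ : Finset (S → Bool)).card := by
      refine Finset.card_le_card_of_injOn (fun τ j => τ j) (by simp) ?_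
      intro τ hτ τ' hτ' h
      simp only [Finset.coe_filter, Finset.mem_univ, true_and, Set.mem_ofPred_eq] at hτ hτ'
      funext j
      by_cases hj : j ∈ S
      · exact congrFun h ⟨j, hj⟩
      · rw [← hτ j hj, ← hτ' j hj]
    have h2 : (Finset.univ : Finset (S → Bool)).card = 2 ^ S.ncard := by
      rw [Finset.card_univ, Fintype.card_fun, Fintype.card_bool, ← Nat.card_eq_fintype_card,
        Nat.card_coe_set_eq]
    rw [h2] at h1
    exact_mod_cast h1.trans (Nat.pow_le_pow_right (by norm_num) hS)
  constructor
  · intro σ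
    refine le_trans ?_ (hcard σ)
    rw [← Finset.sum_boole]
    refine Finset.sum_le_sum fun τ _ => ?_
    split_ifs with h
    · exact (norm_apply_le_opNorm A σ τ).trans hA1
    · push Not at h
      rw [hA.1 σ τ h, norm_zero]
  · intro σ
    refine le_trans ?_ (hcard σ)
    rw [← Finset.sum_boole]
    refine Finset.sum_le_sum fun τ _ => ?_
    split_ifs with h
    · exact (norm_apply_le_opNorm A τ σ).trans hA1
    · push Not at h
      obtain ⟨j, hj, hne⟩ := h
      rw [hA.1 τ σ ⟨j, hj, hne.symm⟩, norm_zero]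

end SupportedOn

section SlowTransport

attribute [local instance] LieRing.ofAssociativeRing LieAlgebra.ofAssociativeAlgebra

section FormalPerturbationTheory

open PowerSeries in
/-- A formal eigenvector, up to order `n`, of the perturbation `E + X V` of a diagonal matrix `E`,
starting from the basis vector `σ`, when `E σ` is nondegenerate within a block `S` of `V`. -/
theorem exists_formal_eigenvector {ι : Type*} [Fintype ι] [DecidableEq ι] (E : ι → ℂ)
    (V : Matrix ι ι ℂ) (S : Set ι) (σ : ι) (hσ : σ ∈ S)
    (hV : ∀ τ τ', τ ∉ S → τ' ∈ S → V τ τ' = 0)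
    (hE : ∀ τ ∈ S, τ ≠ σ → E τ ≠ E σ) (n : ℕ) :
    ∃ (ψ : ι → ℂ⟦X⟧) (e : ℂ⟦X⟧), (∀ τ, constantCoeff (ψ τ) = if τ = σ then 1 else 0) ∧
      constantCoeff e = E σ ∧ (∀ τ, τ ∉ S → ψ τ = 0) ∧
      ∀ τ, X ^ (n + 1) ∣ C (E τ) * ψ τ + X * ∑ τ', C (V τ τ') * ψ τ' - e * ψ τ := by
  classical
  induction n with
  | zero =>
    refine ⟨fun τ => if τ = σ then 1 else 0, C (E σ), ?_, by simp, ?_, ?_⟩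
    · intro τ; by_cases h : τ = σ <;> simp [h]
    · intro τ hτ
      have h : τ ≠ σ := fun h => hτ (h ▸ hσ)
      simp [h]
    · intro τ
      rw [zero_add, pow_one, X_dvd_iff]
      by_cases h : τ = σ <;> simp [h]
  | succ n ih =>
    obtain ⟨ψ, e, hψ, he, hψS, hr⟩ := ih
    choose q hq using hr
    have hqS : ∀ τ, τ ∉ S → q τ = 0 := by
      intro τ hτ
      have h0 : ∑ τ', C (V τ τ') * ψ τ' = 0 := Finset.sum_eq_zero fun τ' _ => by
        by_cases h : τ' ∈ S
        · rw [hV τ τ' hτ h]; simp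
        · rw [hψS τ' h, mul_zero]
      have h1 := hq τ
      rw [hψS τ hτ, h0] at h1
      simpa using h1.symm
    let c : ι → ℂ := fun τ => if τ = σ then 0 else constantCoeff (q τ) / (E σ - E τ)
    let s : ℂ := constantCoeff (q σ)
    refine ⟨fun τ => ψ τ + X ^ (n + 1) * C (c τ), e + X ^ (n + 1) * C s, ?_, ?_, ?_, ?_⟩
    · intro τ; simp [hψ]
    · simp [he]
    · intro τ hτ
      have : c τ = 0 := by
        simp only [c, hqS τ hτ]; simp
      simp [hψS τ hτ, this]
    · intro τ
      have hid : C (E τ) * (ψ τ + X ^ (n + 1) * C (c τ))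
          + X * ∑ τ', C (V τ τ') * (ψ τ' + X ^ (n + 1) * C (c τ'))
          - (e + X ^ (n + 1) * C s) * (ψ τ + X ^ (n + 1) * C (c τ))
          = X ^ (n + 1) * (q τ + (C (E τ) - e) * C (c τ) - C s * ψ τ
            + X * (∑ τ', C (V τ τ') * C (c τ') - X ^ n * C s * C (c τ))) := by
        have h1 : ∑ τ', C (V τ τ') * (ψ τ' + X ^ (n + 1) * C (c τ'))
            = ∑ τ', C (V τ τ') * ψ τ' + X ^ (n + 1) * ∑ τ', C (V τ τ') * C (c τ') := by
          rw [Finset.mul_sum, ← Finset.sum_add_distrib]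
          exact Finset.sum_congr rfl fun _ _ => by ring
        rw [h1]
        have h2 := hq τ
        linear_combination h2
      rw [hid, pow_succ X (n + 1)]
      refine mul_dvd_mul_left _ (X_dvd_iff.mpr ?_)
      by_cases h : τ = σ
      · subst h
        simp [c, s, hψ]
      · by_cases hS : τ ∈ S
        · have hne : E σ - E τ ≠ 0 := sub_ne_zero.mpr (hE τ hS h).symm
          simp only [map_add, map_sub, map_mul, constantCoeff_C, he, hψ, h, if_false,
            constantCoeff_X, c]
          field_simp
          ring
        · have : c τ = 0 := by
            simp only [c, hqS τ hS]; simp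
          simp [this, hqS τ hS, hψS τ hS]

open PowerSeries in
/-- Solvability of the perturbative conservation law: if `∑ Xʲ Q j` commutes with `E + X V` to
order `k`, the obstruction `⁅V, Q k⁆` at the next order has zero diagonal. -/
theorem lie_diag_eq_zero {ι : Type*} [Fintype ι] [DecidableEq ι] (E : ι → ℂ)
    (V : Matrix ι ι ℂ) (r : ι → ι → Prop) (hrefl : ∀ σ, r σ σ)
    (htrans : ∀ σ τ ρ, r σ τ → r τ ρ → r σ ρ)
    (hsymm : ∀ σ τ, r σ τ → r τ σ)
    (hV : ∀ σ τ, ¬ r σ τ → V σ τ = 0) (hE : ∀ σ τ, r σ τ → σ ≠ τ → E σ ≠ E τ)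
    (Q : ℕ → Matrix ι ι ℂ) (k : ℕ) (hQ0 : ⁅Matrix.diagonal E, Q 0⁆ = 0)
    (hQ : ∀ j < k, ⁅Matrix.diagonal E, Q (j + 1)⁆ = -⁅V, Q j⁆) (σ : ι) :
    ⁅V, Q k⁆ σ σ = 0 := by
  obtain ⟨ψ, e, hψ, -, -, hψr⟩ := exists_formal_eigenvector E V {τ | r σ τ} σ (hrefl σ)
    (fun τ τ' h h' => hV τ τ' fun h'' => h (htrans _ _ _ h' (hsymm _ _ h'')))
    (fun τ h hne => (hE σ τ h hne.symm).symm) (k + 1)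
  obtain ⟨φ, e', hφ, -, -, hφr⟩ := exists_formal_eigenvector E V.transpose {τ | r σ τ} σ (hrefl σ)
    (fun τ τ' h h' => hV τ' τ fun h'' => h (htrans _ _ _ h' h''))
    (fun τ h hne => (hE σ τ h hne.symm).symm) (k + 1)
  choose a ha using hψr
  choose b hb using hφr
  let D : Matrix ι ι ℂ →+* Matrix ι ι ℂ⟦X⟧ := (C (R := ℂ)).mapMatrix
  let H : Matrix ι ι ℂ⟦X⟧ := D (Matrix.diagonal E) + (X : ℂ⟦X⟧) • D V
  let P : ℕ → Matrix ι ι ℂ⟦X⟧ := fun m => ∑ j ∈ Finset.range (m + 1), (X : ℂ⟦X⟧) ^ j • D (Q j)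
  have hDlie : ∀ A B : Matrix ι ι ℂ, ⁅D A, D B⁆ = D ⁅A, B⁆ := fun A B => by
    simp [Ring.lie_def]
  have hP : ∀ m ≤ k, ⁅H, P m⁆ = (X : ℂ⟦X⟧) ^ (m + 1) • D ⁅V, Q m⁆ := by
    intro m
    induction m with
    | zero =>
      intro _
      simp only [P, H, zero_add, Finset.range_one, Finset.sum_singleton, pow_zero, one_smul,
        pow_one, add_lie, smul_lie, hDlie, hQ0, map_zero]
    | succ m ih =>
      intro hm
      have h1 : P (m + 1) = P m + (X : ℂ⟦X⟧) ^ (m + 1) • D (Q (m + 1)) :=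
        Finset.sum_range_succ _ _
      rw [h1, lie_add, ih (by omega), lie_smul]
      simp only [H, add_lie, smul_lie, hDlie]
      rw [hQ m (by omega), map_neg, smul_add, smul_neg, smul_smul, ← pow_succ]
      abel
  have hHψ : H.mulVec ψ = e • ψ + (X : ℂ⟦X⟧) ^ (k + 2) • a := by
    funext τ
    have h1 : H.mulVec ψ τ = C (E τ) * ψ τ + X * ∑ τ', C (V τ τ') * ψ τ' := by
      simp only [H, D, Matrix.add_mulVec, Matrix.smul_mulVec, Pi.add_apply, Pi.smul_apply,
        RingHom.mapMatrix_apply, smul_eq_mul]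
      congr 1
      rw [Matrix.diagonal_map (map_zero _), Matrix.mulVec_diagonal]
    rw [h1]
    simp only [Pi.add_apply, Pi.smul_apply, smul_eq_mul]
    linear_combination ha τ
  have hφH : Matrix.vecMul φ H = e' • φ + (X : ℂ⟦X⟧) ^ (k + 2) • b := by
    funext τ
    have h1 : Matrix.vecMul φ H τ = C (E τ) * φ τ + X * ∑ τ', C (V τ' τ) * φ τ' := by
      rw [← Matrix.mulVec_transpose]
      simp only [H, D, Matrix.transpose_add, Matrix.transpose_smul, Matrix.add_mulVec,
        Matrix.smul_mulVec, Pi.add_apply, Pi.smul_apply,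
        RingHom.mapMatrix_apply, smul_eq_mul]
      congr 1
      rw [Matrix.diagonal_map (map_zero _), Matrix.diagonal_transpose, Matrix.mulVec_diagonal]
    rw [h1]
    simp only [Pi.add_apply, Pi.smul_apply, smul_eq_mul]
    have hbτ := hb τ
    simp only [Matrix.transpose_apply] at hbτ
    linear_combination hbτ
  have hconst : ∀ A : Matrix ι ι ℂ, constantCoeff (φ ⬝ᵥ (D A).mulVec ψ) = A σ σ := by
    intro A
    simp [dotProduct, Matrix.mulVec, D, hφ, hψ]
  have hee : X ^ (k + 2) ∣ e' - e := by
    have hu : IsUnit (φ ⬝ᵥ ψ) := by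
      rw [isUnit_iff_constantCoeff]
      simp [dotProduct, hφ, hψ]
    rw [← hu.dvd_mul_right]
    have h1 := Matrix.dotProduct_mulVec φ H ψ
    rw [hHψ, hφH] at h1
    simp only [dotProduct_add, dotProduct_smul, add_dotProduct, smul_dotProduct,
      smul_eq_mul] at h1
    exact ⟨φ ⬝ᵥ a - b ⬝ᵥ ψ, by linear_combination -h1⟩
  obtain ⟨d, hd⟩ := hee
  have hmain : X ^ (k + 2) ∣ X ^ (k + 1) * (φ ⬝ᵥ (D ⁅V, Q k⁆).mulVec ψ) := by
    have h1 : X ^ (k + 1) * (φ ⬝ᵥ (D ⁅V, Q k⁆).mulVec ψ) = φ ⬝ᵥ (⁅H, P k⁆).mulVec ψ := by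
      rw [hP k le_rfl, Matrix.smul_mulVec, dotProduct_smul, smul_eq_mul]
    have h2 : φ ⬝ᵥ (⁅H, P k⁆).mulVec ψ
        = Matrix.vecMul φ H ⬝ᵥ (P k).mulVec ψ - φ ⬝ᵥ (P k).mulVec (H.mulVec ψ) := by
      rw [Ring.lie_def, Matrix.sub_mulVec, dotProduct_sub, ← Matrix.mulVec_mulVec,
        ← Matrix.mulVec_mulVec, Matrix.dotProduct_mulVec φ H]
    rw [h1, h2, hHψ, hφH]
    simp only [dotProduct_add, dotProduct_smul, add_dotProduct, smul_dotProduct,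
      Matrix.mulVec_add, Matrix.mulVec_smul, smul_eq_mul]
    exact ⟨d * (φ ⬝ᵥ (P k).mulVec ψ) + b ⬝ᵥ (P k).mulVec ψ - φ ⬝ᵥ (P k).mulVec a, by
      linear_combination (φ ⬝ᵥ (P k).mulVec ψ) * hd⟩
  rw [pow_succ X (k + 1)] at hmain
  have := (mul_dvd_mul_iff_left (pow_ne_zero (k + 1) (X_ne_zero (R := ℂ)))).mp hmain
  rwa [X_dvd_iff, hconst] at this

end FormalPerturbationTheory

section Dressing

variable {ι : Type*}

/-- The inverse of `A ↦ ⁅E, A⁆` for a diagonal matrix `E`, on matrices without resonant entries. -/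
noncomputable def invAd (E : ι → ℝ) (A : Matrix ι ι ℂ) : Matrix ι ι ℂ :=
  Matrix.of fun σ τ => A σ τ / ((E σ - E τ : ℝ) : ℂ)

theorem invAd_add (E : ι → ℝ) (A B : Matrix ι ι ℂ) :
    invAd E (A + B) = invAd E A + invAd E B := by
  ext σ τ; simp [invAd, add_div]

/-- `A` vanishes between configurations that are not related by `r`. -/
def BlockDiagonal (r : ι → ι → Prop) (A : Matrix ι ι ℂ) : Prop := ∀ σ τ, ¬ r σ τ → A σ τ = 0

variable {r : ι → ι → Prop}

theorem BlockDiagonal.invAd {A : Matrix ι ι ℂ} (hA : BlockDiagonal r A) (E : ι → ℝ) :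
    BlockDiagonal r (invAd E A) := by
  intro σ τ h
  simp [_root_.invAd, hA σ τ h]

theorem blockDiagonal_diagonal [DecidableEq ι] (hr : Equivalence r) (d : ι → ℂ) :
    BlockDiagonal r (Matrix.diagonal d) := by
  intro σ τ h
  exact Matrix.diagonal_apply_ne _ fun h' => h (h' ▸ hr.refl σ)

variable [Fintype ι]

theorem BlockDiagonal.mul (hr : Equivalence r) {A B : Matrix ι ι ℂ} (hA : BlockDiagonal r A)
    (hB : BlockDiagonal r B) : BlockDiagonal r (A * B) := by
  intro σ τ h
  rw [Matrix.mul_apply]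
  refine Finset.sum_eq_zero fun ρ _ => ?_
  by_cases h1 : r σ ρ
  · rw [hB ρ τ fun h2 => h (hr.trans h1 h2), mul_zero]
  · rw [hA σ ρ h1, zero_mul]

theorem BlockDiagonal.lie (hr : Equivalence r) {A B : Matrix ι ι ℂ} (hA : BlockDiagonal r A)
    (hB : BlockDiagonal r B) : BlockDiagonal r ⁅A, B⁆ := by
  intro σ τ h
  rw [Ring.lie_def, Matrix.sub_apply, hA.mul hr hB σ τ h, hB.mul hr hA σ τ h, sub_zero]

theorem SchurBound.invAd {E : ι → ℝ} {A : Matrix ι ι ℂ} {s δ : ℝ} (hA : SchurBound A s)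
    (hAr : BlockDiagonal r A) (hδ : 0 < δ) (hE : ∀ σ τ, r σ τ → σ ≠ τ → δ ≤ |E σ - E τ|) :
    SchurBound (invAd E A) (δ⁻¹ * s) := by
  refine hA.of_norm_le (by positivity) fun σ τ => ?_
  simp only [_root_.invAd, Matrix.of_apply, norm_div, Complex.norm_real, Real.norm_eq_abs]
  by_cases hστ : σ = τ
  · subst hστ; simp; positivity
  · by_cases h : r σ τ
    · rw [div_eq_inv_mul]
      gcongr
      exact hE σ τ h hστ
    · simp [hAr σ τ h]

variable [DecidableEq ι]

theorem lie_diagonal_apply (E : ι → ℝ) (A : Matrix ι ι ℂ) (σ τ : ι) :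
    ⁅Matrix.diagonal fun σ => (E σ : ℂ), A⁆ σ τ = ((E σ - E τ : ℝ) : ℂ) * A σ τ := by
  rw [Ring.lie_def, Matrix.sub_apply, Matrix.diagonal_mul, Matrix.mul_diagonal]
  push_cast; ring

theorem lie_invAd {E : ι → ℝ} {A : Matrix ι ι ℂ} (h : ∀ σ τ, E σ = E τ → A σ τ = 0) :
    ⁅Matrix.diagonal fun σ => (E σ : ℂ), invAd E A⁆ = A := by
  ext σ τ
  rw [lie_diagonal_apply]
  by_cases hE : E σ = E τ
  · simp [hE, h σ τ hE]
  · have : ((E σ - E τ : ℝ) : ℂ) ≠ 0 := by exact_mod_cast sub_ne_zero.mpr hE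
    simp only [invAd, Matrix.of_apply]
    field_simp

/-- The coefficients of the dressed conserved quantity: a formal solution `Q = ∑ Jᵏ Q k` of
`⁅E + J V, Q⁆ = 0` with `Q 0 = EL` whose diagonal is that of `EL + J VL`. -/
noncomputable def dressing (E EL : ι → ℝ) (V VL : Matrix ι ι ℂ) : ℕ → Matrix ι ι ℂ
  | 0 => Matrix.diagonal fun σ => (EL σ : ℂ)
  | 1 => Matrix.diagonal VL.diag - invAd E ⁅V, Matrix.diagonal fun σ => (EL σ : ℂ)⁆
  | k + 2 => -invAd E ⁅V, dressing E EL V VL (k + 1)⁆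

variable {E EL : ι → ℝ} {V VL : Matrix ι ι ℂ}

theorem dressing_one : dressing E EL V VL 1
    = Matrix.diagonal VL.diag - invAd E ⁅V, dressing E EL V VL 0⁆ := rfl

theorem blockDiagonal_dressing (hr : Equivalence r) (hV : BlockDiagonal r V) (k : ℕ) :
    BlockDiagonal r (dressing E EL V VL k) := by
  induction k with
  | zero => exact blockDiagonal_diagonal hr _
  | succ k ih =>
    have h1 := (hV.lie hr ih).invAd E
    intro σ τ h
    cases k with
    | zero =>
      rw [dressing, Matrix.sub_apply, blockDiagonal_diagonal hr _ σ τ h]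
      rw [dressing] at h1
      rw [h1 σ τ h, sub_zero]
    | succ k => rw [dressing, Matrix.neg_apply, h1 σ τ h, neg_zero]

theorem lie_dressing_succ (hr : Equivalence r) (hV : BlockDiagonal r V)
    (hE : ∀ σ τ, r σ τ → σ ≠ τ → E σ ≠ E τ) (k : ℕ) :
    ⁅Matrix.diagonal fun σ => (E σ : ℂ), dressing E EL V VL (k + 1)⁆
      = -⁅V, dressing E EL V VL k⁆ := by
  induction k using Nat.strong_induction_on with
  | _ k ih =>
    have hdiag : ∀ d : ι → ℂ, ⁅Matrix.diagonal fun σ => (E σ : ℂ), Matrix.diagonal d⁆ = 0 := by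
      intro d
      rw [Ring.lie_def, Matrix.diagonal_mul_diagonal, Matrix.diagonal_mul_diagonal, sub_eq_zero]
      simp only [mul_comm]
    have hres : ∀ σ τ, E σ = E τ → ⁅V, dressing E EL V VL k⁆ σ τ = 0 := by
      intro σ τ h
      by_cases hστ : σ = τ
      · subst hστ
        have h0 : ⁅Matrix.diagonal fun σ => (E σ : ℂ), dressing E EL V VL 0⁆ = 0 := by
          rw [dressing, hdiag]
        have hE' : ∀ σ τ, r σ τ → σ ≠ τ → (E σ : ℂ) ≠ (E τ : ℂ) := fun σ τ h1 h2 h3 =>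
          hE σ τ h1 h2 (Complex.ofReal_injective h3)
        exact lie_diag_eq_zero (fun σ => (E σ : ℂ)) V r hr.refl (fun _ _ _ => hr.trans)
          (fun _ _ => hr.symm) hV hE' (dressing E EL V VL) k h0 ih σ
      · exact hV.lie hr (blockDiagonal_dressing hr hV k) σ τ fun h' => hE σ τ h' hστ h
    cases k with
    | zero =>
      rw [zero_add, dressing_one, lie_sub, hdiag, zero_sub, lie_invAd hres]
    | succ k => rw [dressing, lie_neg, lie_invAd hres]

theorem lie_sum_dressing (hr : Equivalence r) (hV : BlockDiagonal r V)
    (hE : ∀ σ τ, r σ τ → σ ≠ τ → E σ ≠ E τ) (J : ℝ) (n : ℕ) :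
    ⁅(Matrix.diagonal fun σ => (E σ : ℂ)) + J • V,
      ∑ k ∈ Finset.range (n + 1), J ^ k • dressing E EL V VL k⁆
      = J ^ (n + 1) • ⁅V, dressing E EL V VL n⁆ := by
  induction n with
  | zero =>
    rw [zero_add, Finset.sum_range_one, pow_zero, one_smul, pow_one, add_lie, smul_lie]
    have : ⁅Matrix.diagonal fun σ => (E σ : ℂ), dressing E EL V VL 0⁆ = 0 := by
      rw [dressing, Ring.lie_def, Matrix.diagonal_mul_diagonal, Matrix.diagonal_mul_diagonal,
        sub_eq_zero]
      simp only [mul_comm]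
    rw [this, zero_add]
  | succ n ih =>
    rw [Finset.sum_range_succ, lie_add, ih, lie_smul, add_lie, smul_lie,
      lie_dressing_succ hr hV hE, smul_add, smul_neg, smul_smul, ← pow_succ]
    abel

theorem schurBound_dressing (hr : Equivalence r) (hV : BlockDiagonal r V) {K D δ : ℝ}
    (hK : SchurBound V K) (hKL : SchurBound VL K) (hK0 : 0 ≤ K) (hD : 1 ≤ D)
    (hEL : ∀ σ, |EL σ| ≤ D) (hδ : 0 < δ) (hδ1 : δ ≤ 1)
    (hE : ∀ σ τ, r σ τ → σ ≠ τ → δ ≤ |E σ - E τ|) (k : ℕ) :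
    SchurBound (dressing E EL V VL k) (D * (3 * K / δ) ^ k) := by
  induction k with
  | zero =>
    rw [pow_zero, mul_one, dressing]
    exact SchurBound.diagonal fun σ => by simpa using hEL σ
  | succ k ih =>
    have hpos : 0 ≤ D * (3 * K / δ) ^ k := by positivity
    have h1 := (hK.lie ih hK0 hpos).invAd (hV.lie hr (blockDiagonal_dressing hr hV k)) hδ hE
    have heq : δ⁻¹ * (2 * K * (D * (3 * K / δ) ^ k)) = 2 * K / δ * (D * (3 * K / δ) ^ k) := by
      field_simp
    rw [heq] at h1
    cases k with
    | zero =>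
      have h2 : SchurBound (Matrix.diagonal VL.diag) K := SchurBound.diagonal fun σ =>
        (Finset.single_le_sum (f := fun τ => ‖VL σ τ‖) (fun _ _ => norm_nonneg _)
          (Finset.mem_univ σ)).trans (hKL.1 σ)
      rw [dressing]
      refine (h2.sub h1).mono ?_
      have h3 : K ≤ K * D / δ := by
        rw [le_div_iff₀ hδ]; gcongr; linarith
      calc K + 2 * K / δ * (D * (3 * K / δ) ^ 0) ≤ K * D / δ + 2 * K / δ * D := by
            rw [pow_zero, mul_one]; gcongr
        _ = D * (3 * K / δ) ^ (0 + 1) := by ring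
    | succ k =>
      rw [dressing]
      refine h1.neg.mono ?_
      rw [pow_succ (3 * K / δ) (k + 1)]
      have h3 : 2 * K / δ ≤ 3 * K / δ := by gcongr; norm_num
      calc _ ≤ 3 * K / δ * (D * (3 * K / δ) ^ (k + 1)) := by gcongr
        _ = _ := by ring

end Dressing

section Chain

variable {N : ℕ}

/-- The energy of the configuration `σ` in the field `h`. -/
noncomputable def fieldEnergy (h : Fin N → ℝ) (σ : Fin N → Bool) : ℝ :=
  ∑ i, h i * if σ i then 1 else -1

theorem sum_smul_pauliZ (h : Fin N → ℝ) :
    ∑ i, h i • PauliZ i = Matrix.diagonal fun σ => (fieldEnergy h σ : ℂ) := by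
  ext σ τ
  rw [Matrix.sum_apply]
  by_cases hστ : σ = τ
  · subst hστ
    simp only [PauliZ, fieldEnergy, Matrix.smul_apply, Matrix.diagonal_apply_eq]
    push_cast
    refine Finset.sum_congr rfl fun i _ => ?_
    split_ifs <;> simp
  · simp [PauliZ, Matrix.diagonal_apply_ne _ hστ]

theorem fieldEnergy_sub (h : Fin N → ℝ) (σ τ : Fin N → Bool) :
    fieldEnergy h σ - fieldEnergy h τ
      = ∑ i, h i * ((if σ i then 1 else -1) - if τ i then 1 else -1) := by
  rw [fieldEnergy, fieldEnergy, ← Finset.sum_sub_distrib]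
  exact Finset.sum_congr rfl fun _ _ => by ring

theorem abs_fieldEnergy_le (h : Fin N → ℝ) (σ : Fin N → Bool) :
    |fieldEnergy h σ| ≤ ∑ i, |h i| := by
  refine (Finset.abs_sum_le_sum_abs _ _).trans (Finset.sum_le_sum fun i _ => ?_)
  rw [abs_mul]
  split_ifs <;> simp

theorem SupportedOn.invAd {A : SpinOp N} {S : Set (Fin N)} (hA : SupportedOn A S)
    (h : Fin N → ℝ) : SupportedOn (invAd (fieldEnergy h) A) S := by
  refine ⟨fun σ σ' hd => by simp [_root_.invAd, hA.1 σ σ' hd], ?_⟩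
  intro σ σ' τ τ' h1 h2 h3 h4
  have hE : fieldEnergy h σ - fieldEnergy h σ' = fieldEnergy h τ - fieldEnergy h τ' := by
    rw [fieldEnergy_sub, fieldEnergy_sub]
    refine Finset.sum_congr rfl fun i _ => ?_
    by_cases hi : i ∈ S
    · rw [h1 i hi, h2 i hi]
    · rw [h3 i hi, h4 i hi, sub_self, sub_self]
  simp only [_root_.invAd, Matrix.of_apply, hE, hA.2 σ σ' τ τ' h1 h2 h3 h4]

/-- The sites on which the interaction term with index `i` acts. -/
def bond (R : ℕ) (i : Fin N) : Set (Fin N) :=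
  {j : Fin N | (i : ℤ) ≤ (j : ℤ) ∧ (j : ℤ) ≤ (i : ℤ) + R - 1}

/-- The sites at distance at most `m` from the cut between the sites `c - 1` and `c`. -/
def zone (c m : ℕ) : Set (Fin N) := {j : Fin N | (c : ℤ) - m ≤ j ∧ (j : ℤ) < c + m}

theorem ncard_int_interval_le (a b : ℤ) (m : ℕ) (h : b ≤ a + m) :
    ({j : Fin N | a ≤ (j : ℤ) ∧ (j : ℤ) < b}).ncard ≤ m := by
  have h1 : ({j : Fin N | a ≤ (j : ℤ) ∧ (j : ℤ) < b}).ncard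
      ≤ ((Finset.Ico a b : Finset ℤ) : Set ℤ).ncard := by
    refine Set.ncard_le_ncard_of_injOn (fun j : Fin N => (j : ℤ)) ?_ ?_ (Finset.finite_toSet _)
    · intro j hj
      simpa using hj
    · intro i _ j _ hij
      exact Fin.ext (by simpa using hij)
  rw [Set.ncard_coe_finset, Int.card_Ico] at h1
  omega

theorem ncard_bond_le (R : ℕ) (i : Fin N) : (bond R i).ncard ≤ R := by
  refine le_trans (le_of_eq ?_) (ncard_int_interval_le (N := N) (i : ℤ) (i + R) R le_rfl)
  congr 1
  ext j
  simp only [bond, Set.mem_ofPred_eq]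
  omega

theorem ncard_zone_le (c m : ℕ) : (zone (N := N) c m).ncard ≤ 2 * m :=
  ncard_int_interval_le _ _ _ (by push_cast; omega)

/-- The part of the Hamiltonian with indices smaller than `c`. -/
noncomputable def HamCut (N : ℕ) (J : ℝ) (h : Fin N → ℝ) (V : Fin N → SpinOp N) (c : ℕ) :
    SpinOp N :=
  ∑ i ∈ Finset.univ.filter fun i : Fin N => (i : ℕ) < c, (h i • PauliZ i + J • V i)

theorem lie_sum_filter (a : Fin N → SpinOp N) (c : ℕ) :
    ⁅∑ i, a i, ∑ i ∈ Finset.univ.filter fun i : Fin N => (i : ℕ) < c, a i⁆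
      = ∑ i ∈ Finset.univ.filter fun i : Fin N => ¬ (i : ℕ) < c,
        ∑ j ∈ Finset.univ.filter fun i : Fin N => (i : ℕ) < c, ⁅a i, a j⁆ := by
  rw [← Finset.sum_filter_add_sum_filter_not Finset.univ (fun i : Fin N => (i : ℕ) < c) a,
    add_lie, lie_self, zero_add, sum_lie]
  exact Finset.sum_congr rfl fun i _ => lie_sum ..

theorem disjoint_bond {R : ℕ} {i j : Fin N} (h : (i : ℤ) + R ≤ j) :
    Disjoint (bond R j) (bond R i) := by
  rw [Set.disjoint_left]
  intro k hk hk'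
  simp only [bond, Set.mem_ofPred_eq] at hk hk'
  omega

/-- The commutator of a range-`R` Hamiltonian with its left part only depends on the terms with
indices within distance `R` of the cut. -/
theorem lie_sum_filter_congr {R : ℕ} {a b : Fin N → SpinOp N} (c : ℕ)
    (ha : ∀ i, SupportedOn (a i) (bond R i)) (hb : ∀ i, SupportedOn (b i) (bond R i))
    (hab : ∀ i : Fin N, (c : ℤ) - R ≤ i → (i : ℤ) < c + R → a i = b i) :
    ⁅∑ i, a i, ∑ i ∈ Finset.univ.filter fun i : Fin N => (i : ℕ) < c, a i⁆
      = ⁅∑ i, b i, ∑ i ∈ Finset.univ.filter fun i : Fin N => (i : ℕ) < c, b i⁆ := by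
  rw [lie_sum_filter, lie_sum_filter]
  refine Finset.sum_congr rfl fun i hi => Finset.sum_congr rfl fun j hj => ?_
  simp only [Finset.mem_filter, Finset.mem_univ, true_and, not_lt] at hi hj
  by_cases h : (j : ℤ) + R ≤ i
  · rw [(ha i).lie_eq_zero (ha j) (disjoint_bond h), (hb i).lie_eq_zero (hb j) (disjoint_bond h)]
  · rw [hab i (by omega) (by omega), hab j (by omega) (by omega)]

theorem supportedOn_lie_sum_filter {R : ℕ} {a : Fin N → SpinOp N} (c : ℕ)
    (ha : ∀ i, SupportedOn (a i) (bond R i)) :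
    SupportedOn ⁅∑ i, a i, ∑ i ∈ Finset.univ.filter fun i : Fin N => (i : ℕ) < c, a i⁆
      (zone c (2 * R)) := by
  rw [lie_sum_filter]
  refine SupportedOn.sum _ fun i hi => SupportedOn.sum _ fun j hj => ?_
  simp only [Finset.mem_filter, Finset.mem_univ, true_and, not_lt] at hi hj
  by_cases h : (j : ℤ) + R ≤ i
  · rw [(ha i).lie_eq_zero (ha j) (disjoint_bond h)]
    exact SupportedOn.zero _
  · refine ((ha i).mono ?_).lie ((ha j).mono ?_) <;>
    · intro k hk
      simp only [bond, zone, Set.mem_ofPred_eq] at hk ⊢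
      push_cast
      omega

theorem supportedOn_lie_of_zone {R : ℕ} {a : Fin N → SpinOp N} {c k : ℕ}
    (ha : ∀ i, SupportedOn (a i) (bond R i)) {A : SpinOp N} (hA : SupportedOn A (zone c (k * R))) :
    SupportedOn ⁅∑ i, a i, A⁆ (zone c ((k + 1) * R)) := by
  rw [sum_lie]
  refine SupportedOn.sum _ fun i _ => ?_
  by_cases h : Disjoint (bond R i) (zone c (k * R))
  · rw [(ha i).lie_eq_zero hA h]
    exact SupportedOn.zero _
  · obtain ⟨l, hl, hl'⟩ := Set.not_disjoint_iff.mp h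
    simp only [bond, zone, Set.mem_ofPred_eq] at hl hl'
    refine ((ha i).mono ?_).lie (hA.mono ?_) <;>
    · intro j hj
      simp only [bond, zone, Set.mem_ofPred_eq] at hj ⊢
      push_cast [add_mul] at hl' hj ⊢
      omega

/-- The order-one source term of the dressing is supported near the cut. -/
theorem supportedOn_source {R : ℕ} {a : Fin N → SpinOp N} (c : ℕ)
    (ha : ∀ i, SupportedOn (a i) (bond R i)) (h : Fin N → ℝ) :
    SupportedOn (⁅Matrix.diagonal fun σ => (fieldEnergy h σ : ℂ),
        ∑ i ∈ Finset.univ.filter fun i : Fin N => (i : ℕ) < c, a i⁆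
      + ⁅∑ i, a i, Matrix.diagonal fun σ =>
          (fieldEnergy (fun j => if (j : ℕ) < c then h j else 0) σ : ℂ)⁆)
      (zone c (1 * R)) := by
  rw [← lie_skew (∑ i, a i), ← sum_smul_pauliZ, ← sum_smul_pauliZ, Finset.sum_filter, sum_lie,
    sum_lie, ← Finset.sum_neg_distrib, ← Finset.sum_add_distrib]
  refine SupportedOn.sum _ fun j _ => ?_
  rw [lie_sum, lie_sum, ← Finset.sum_neg_distrib, ← Finset.sum_add_distrib]
  refine SupportedOn.sum _ fun i _ => ?_
  have hZ : ∀ S : Set (Fin N), j ∈ S → SupportedOn (h j • PauliZ j) S :=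
    fun S hS => (SupportedOn.pauliZ hS).smul _
  have hcomm : j ∉ bond R i → ⁅h j • PauliZ j, a i⁆ = 0 := fun hj =>
    (hZ {j} rfl).lie_eq_zero (ha i) (Set.disjoint_singleton_left.mpr hj)
  by_cases hi : (i : ℕ) < c <;> by_cases hj : (j : ℕ) < c <;>
    simp only [hi, hj, if_true, if_false, zero_smul, zero_lie, lie_zero, neg_zero, add_zero,
      zero_add, add_neg_cancel]
  · exact SupportedOn.zero _
  · by_cases hb : j ∈ bond R i
    · have hsub : bond R i ⊆ zone c (1 * R) := by
        intro k hk
        simp only [bond, zone, Set.mem_ofPred_eq] at hk hb ⊢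
        push_cast
        omega
      exact (hZ _ (hsub hb)).lie ((ha i).mono hsub)
    · rw [hcomm hb]; exact SupportedOn.zero _
  · rw [hcomm, neg_zero]
    · exact SupportedOn.zero _
    · simp only [bond, Set.mem_ofPred_eq]
      omega
  · exact SupportedOn.zero _

end Chain

section Cut

variable {N : ℕ}

/-- The left part of the field `h` at the cut `c`. -/
noncomputable def leftField (h : Fin N → ℝ) (c : ℕ) (j : Fin N) : ℝ :=
  if (j : ℕ) < c then h j else 0

/-- The left part of an interaction at the cut `c`. -/
noncomputable def leftSum (V : Fin N → SpinOp N) (c : ℕ) : SpinOp N :=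
  ∑ i ∈ Finset.univ.filter fun i : Fin N => (i : ℕ) < c, V i

/-- The dressing coefficients for the left Hamiltonian at the cut `c`. -/
noncomputable def cutDressing (h : Fin N → ℝ) (V : Fin N → SpinOp N) (c : ℕ) : ℕ → SpinOp N :=
  dressing (fieldEnergy h) (fieldEnergy (leftField h c)) (∑ i, V i) (leftSum V c)

theorem ham_eq (J : ℝ) (h : Fin N → ℝ) (V : Fin N → SpinOp N) :
    Ham N J h V = (Matrix.diagonal fun σ => (fieldEnergy h σ : ℂ)) + J • ∑ i, V i := by
  rw [Ham, Finset.sum_add_distrib, sum_smul_pauliZ, Finset.smul_sum]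

theorem hamCut_eq (J : ℝ) (h : Fin N → ℝ) (V : Fin N → SpinOp N) (c : ℕ) :
    HamCut N J h V c
      = (Matrix.diagonal fun σ => (fieldEnergy (leftField h c) σ : ℂ)) + J • leftSum V c := by
  rw [HamCut, Finset.sum_add_distrib, ← sum_smul_pauliZ, leftSum, Finset.smul_sum,
    Finset.sum_filter]
  congr 1
  refine Finset.sum_congr rfl fun i _ => ?_
  rw [leftField]
  split_ifs <;> simp

/-- The difference between the left Hamiltonian and its dressing truncated at order `n`. -/
noncomputable def cutRemainder (J : ℝ) (h : Fin N → ℝ) (V : Fin N → SpinOp N) (c n : ℕ) :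
    SpinOp N :=
  HamCut N J h V c - ∑ k ∈ Finset.range (n + 1), J ^ k • cutDressing h V c k

theorem cutRemainder_zero (J : ℝ) (h : Fin N → ℝ) (V : Fin N → SpinOp N) (c : ℕ) :
    cutRemainder J h V c 0 = J • leftSum V c := by
  rw [cutRemainder, hamCut_eq, zero_add, Finset.sum_range_one, pow_zero, one_smul, cutDressing,
    dressing, add_sub_cancel_left]

theorem cutRemainder_succ (J : ℝ) (h : Fin N → ℝ) (V : Fin N → SpinOp N) (c n : ℕ) :
    cutRemainder J h V c (n + 1)
      = cutRemainder J h V c n - J ^ (n + 1) • cutDressing h V c (n + 1) := by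
  rw [cutRemainder, Finset.sum_range_succ, cutRemainder]
  abel

variable {r : (Fin N → Bool) → (Fin N → Bool) → Prop} {R : ℕ} {h : Fin N → ℝ}
  {V : Fin N → SpinOp N}

theorem blockDiagonal_sum (s : Finset (Fin N)) (hVr : ∀ i, BlockDiagonal r (V i)) :
    BlockDiagonal r (∑ i ∈ s, V i) := by
  intro σ τ hst
  rw [Matrix.sum_apply]
  exact Finset.sum_eq_zero fun i _ => hVr i σ τ hst

theorem supportedOn_leftSum_sub_cutDressing (hVr : ∀ i, BlockDiagonal r (V i))
    (hE : ∀ σ τ, r σ τ → σ ≠ τ → fieldEnergy h σ ≠ fieldEnergy h τ)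
    (hV : ∀ i, SupportedOn (V i) (bond R i)) (c : ℕ) :
    SupportedOn (leftSum V c - cutDressing h V c 1) (zone c (1 * R)) := by
  have key : leftSum V c - cutDressing h V c 1
      = invAd (fieldEnergy h) (⁅Matrix.diagonal fun σ => (fieldEnergy h σ : ℂ), leftSum V c⁆
        + ⁅∑ i, V i, Matrix.diagonal fun σ => (fieldEnergy (leftField h c) σ : ℂ)⁆) := by
    have h1 : leftSum V c = Matrix.diagonal (leftSum V c).diag
        + invAd (fieldEnergy h) ⁅Matrix.diagonal fun σ => (fieldEnergy h σ : ℂ), leftSum V c⁆ := by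
      ext σ τ
      rw [Matrix.add_apply, invAd, Matrix.of_apply, lie_diagonal_apply]
      by_cases hst : σ = τ
      · subst hst; simp
      · rw [Matrix.diagonal_apply_ne _ hst, zero_add]
        by_cases hrst : r σ τ
        · have : ((fieldEnergy h σ - fieldEnergy h τ : ℝ) : ℂ) ≠ 0 := by
            exact_mod_cast sub_ne_zero.mpr (hE σ τ hrst hst)
          field_simp
        · have := blockDiagonal_sum (Finset.univ.filter fun i : Fin N => (i : ℕ) < c) hVr σ τ hrst
          rw [leftSum, this]; simp
    rw [invAd_add, cutDressing, dressing]
    nth_rewrite 1 [h1]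
    abel
  rw [key]
  exact (supportedOn_source c hV h).invAd h

theorem supportedOn_cutDressing (hVr : ∀ i, BlockDiagonal r (V i))
    (hE : ∀ σ τ, r σ τ → σ ≠ τ → fieldEnergy h σ ≠ fieldEnergy h τ)
    (hV : ∀ i, SupportedOn (V i) (bond R i)) (c k : ℕ) :
    SupportedOn (cutDressing h V c (k + 2)) (zone c ((k + 2) * R)) := by
  induction k with
  | zero =>
    rw [cutDressing, dressing]
    refine (SupportedOn.invAd ?_ h).neg
    have h1 := supportedOn_leftSum_sub_cutDressing hVr hE hV c
    have h2 := (supportedOn_lie_sum_filter c hV).sub (supportedOn_lie_of_zone hV h1)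
    rwa [lie_sub, ← leftSum, sub_sub_cancel] at h2
  | succ k ih =>
    rw [cutDressing, dressing]
    exact ((supportedOn_lie_of_zone hV ih).invAd h).neg

theorem supportedOn_cutRemainder (hVr : ∀ i, BlockDiagonal r (V i))
    (hE : ∀ σ τ, r σ τ → σ ≠ τ → fieldEnergy h σ ≠ fieldEnergy h τ)
    (hV : ∀ i, SupportedOn (V i) (bond R i)) (J : ℝ) (c n : ℕ) :
    SupportedOn (cutRemainder J h V c (n + 1)) (zone c ((n + 1) * R)) := by
  induction n with
  | zero =>
    rw [cutRemainder_succ, cutRemainder_zero, zero_add, pow_one, ← smul_sub]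
    exact (supportedOn_leftSum_sub_cutDressing hVr hE hV c).smul J
  | succ n ih =>
    rw [cutRemainder_succ]
    refine (ih.mono ?_).sub ((supportedOn_cutDressing hVr hE hV c n).smul _)
    intro j hj
    simp only [zone, Set.mem_ofPred_eq] at hj ⊢
    push_cast [add_mul] at hj ⊢
    omega

/-- The field restricted to the window of half-width `w` around the cut `c`. -/
noncomputable def windowField (c w : ℕ) (h : Fin N → ℝ) (j : Fin N) : ℝ :=
  if (c : ℤ) - w ≤ j ∧ (j : ℤ) < c + w then h j else 0

/-- The interaction terms acting inside the window of half-width `w` around the cut `c`. -/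
noncomputable def windowTerm (R c w : ℕ) (V : Fin N → SpinOp N) (i : Fin N) : SpinOp N :=
  if (c : ℤ) - w ≤ i ∧ (i : ℤ) + R ≤ c + w then V i else 0

/-- The configurations `σ` and `τ` agree outside of the window of half-width `w` around `c`. -/
def AgreeOutside (c w : ℕ) (σ τ : Fin N → Bool) : Prop := ∀ j, j ∉ zone c w → σ j = τ j

theorem agreeOutside_equivalence (c w : ℕ) : Equivalence (AgreeOutside (N := N) c w) :=
  ⟨fun _ _ _ => rfl, fun h j hj => (h j hj).symm, fun h h' j hj => (h j hj).trans (h' j hj)⟩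

theorem supportedOn_windowTerm (hV : ∀ i, SupportedOn (V i) (bond R i)) (c w : ℕ) (i : Fin N) :
    SupportedOn (windowTerm R c w V i) (bond R i) := by
  rw [windowTerm]
  split_ifs
  · exact hV i
  · exact SupportedOn.zero _

theorem blockDiagonal_windowTerm (hV : ∀ i, SupportedOn (V i) (bond R i)) (c w : ℕ) (i : Fin N) :
    BlockDiagonal (AgreeOutside c w) (windowTerm R c w V i) := by
  intro σ τ hst
  rw [windowTerm]
  split_ifs with hi
  · simp only [AgreeOutside, not_forall] at hst
    obtain ⟨j, hj, hjst⟩ := hst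
    refine (hV i).1 σ τ ⟨j, fun hb => hj ?_, hjst⟩
    simp only [bond, zone, Set.mem_ofPred_eq] at hb ⊢
    omega
  · rfl

/-- The local operator which transports the energy current from the cut `c`, up to a small error,
when the window of half-width `(n + 1) * R` around `c` is non-resonant. -/
noncomputable def cutCorrection (R : ℕ) (J : ℝ) (V : Fin N → SpinOp N) (c n : ℕ)
    (h : Fin N → ℝ) : SpinOp N :=
  cutRemainder J (windowField c ((n + 1) * R) h) (windowTerm R c ((n + 1) * R) V) c n

theorem supportedOn_hamTerm (hR : 1 ≤ R) (hV : ∀ i, SupportedOn (V i) (bond R i)) (J : ℝ)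
    (h : Fin N → ℝ) (i : Fin N) : SupportedOn (h i • PauliZ i + J • V i) (bond R i) := by
  refine ((SupportedOn.pauliZ ?_).smul _).add ((hV i).smul _)
  simp only [bond, Set.mem_ofPred_eq]
  omega

theorem lie_ham_sub_cutCorrection (hR : 1 ≤ R) (hV : ∀ i, SupportedOn (V i) (bond R i)) (J : ℝ)
    (c : ℕ) {n : ℕ} (hn : 1 ≤ n)
    (hE : ∀ σ τ, AgreeOutside c ((n + 1) * R) σ τ → σ ≠ τ →
      fieldEnergy (windowField c ((n + 1) * R) h) σ
        ≠ fieldEnergy (windowField c ((n + 1) * R) h) τ) :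
    ⁅Ham N J h V, HamCut N J h V c⁆ - ⁅Ham N J h V, cutCorrection R J V c n h⁆
      = J ^ (n + 1) • ⁅∑ i, windowTerm R c ((n + 1) * R) V i,
          cutDressing (windowField c ((n + 1) * R) h) (windowTerm R c ((n + 1) * R) V) c n⁆ := by
  obtain ⟨n, rfl⟩ := Nat.exists_eq_succ_of_ne_zero (Nat.one_le_iff_ne_zero.mp hn)
  set w := (n.succ + 1) * R with hw
  have hw' : w = (n + 1) * R + R := by rw [hw, Nat.succ_eq_add_one, Nat.add_one_mul]
  have hnR : R ≤ (n + 1) * R := Nat.le_mul_of_pos_left R n.succ_pos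
  have hVw := supportedOn_windowTerm hV c w
  have hVr := blockDiagonal_windowTerm hV c w
  have hO := supportedOn_cutRemainder hVr hE hVw J c n
  have h1 : ⁅Ham N J h V, HamCut N J h V c⁆
      = ⁅Ham N J (windowField c w h) (windowTerm R c w V),
          HamCut N J (windowField c w h) (windowTerm R c w V) c⁆ := by
    refine lie_sum_filter_congr c (supportedOn_hamTerm hR hV J h)
      (supportedOn_hamTerm hR hVw J _) fun i hi hi' => ?_
    rw [windowField, windowTerm, if_pos (by omega), if_pos (by omega)]
  have h2 : ⁅Ham N J h V, cutCorrection R J V c n.succ h⁆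
      = ⁅Ham N J (windowField c w h) (windowTerm R c w V), cutCorrection R J V c n.succ h⁆ := by
    rw [Ham, Ham, sum_lie, sum_lie]
    refine Finset.sum_congr rfl fun i _ => ?_
    rw [add_lie, add_lie]
    congr 1
    · rw [windowField]
      split_ifs with hi
      · rfl
      · rw [zero_smul, zero_lie]
        refine ((SupportedOn.pauliZ (Set.mem_singleton i)).smul _).lie_eq_zero hO ?_
        rw [Set.disjoint_singleton_left]
        simp only [zone, Set.mem_ofPred_eq]
        omega
    · rw [windowTerm]
      split_ifs with hi
      · rfl
      · rw [smul_zero, zero_lie]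
        refine ((hV i).smul _).lie_eq_zero hO ?_
        rw [Set.disjoint_left]
        intro j hj hj'
        simp only [bond, zone, Set.mem_ofPred_eq] at hj hj'
        omega
  rw [h1, h2, ← lie_sub, cutCorrection, cutRemainder, sub_sub_cancel, ham_eq]
  exact lie_sum_dressing (agreeOutside_equivalence c w) (blockDiagonal_sum _ hVr) hE J n.succ

end Cut

section Bounds

variable {N : ℕ} {R : ℕ} {h : Fin N → ℝ} {V : Fin N → SpinOp N}

theorem sum_le_of_zone {c w : ℕ} {f : Fin N → ℝ} {C : ℝ} (hC : 0 ≤ C) (hf : ∀ j, f j ≤ C)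
    (hf0 : ∀ j, j ∉ zone c w → f j = 0) : ∑ j, f j ≤ (2 * w : ℕ) * C := by
  classical
  have h1 : ∑ j, f j = ∑ j ∈ Finset.univ.filter (· ∈ zone c w), f j := by
    rw [Finset.sum_filter]
    exact Finset.sum_congr rfl fun j _ => by
      split_ifs with hj
      · rfl
      · exact hf0 j hj
  have h2 : (Finset.univ.filter (· ∈ zone (N := N) c w)).card ≤ 2 * w := by
    rw [← Set.ncard_coe_finset]
    simpa using ncard_zone_le c w
  calc ∑ j, f j ≤ (Finset.univ.filter (· ∈ zone (N := N) c w)).card • C := by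
        rw [h1]; exact Finset.sum_le_card_nsmul _ _ _ fun j _ => hf j
    _ ≤ (2 * w : ℕ) * C := by
        rw [nsmul_eq_mul]
        gcongr

theorem schurBound_sum_windowTerm (hR : 1 ≤ R) (hV : ∀ i, SupportedOn (V i) (bond R i))
    (hV1 : ∀ i, opNorm (V i) ≤ 1) (c w : ℕ) (s : Finset (Fin N)) :
    SchurBound (∑ i ∈ s, windowTerm R c w V i) ((2 * w : ℕ) * 2 ^ R) := by
  have h1 : ∀ i ∈ s, SchurBound (windowTerm R c w V i)
      (if (c : ℤ) - w ≤ i ∧ (i : ℤ) < c + w then 2 ^ R else 0) := by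
    intro i _
    have hi := (hV i).schurBound (hV1 i) (ncard_bond_le R i)
    rw [windowTerm]
    split_ifs with h1 h2 h2
    · exact hi
    · omega
    · exact SchurBound.zero.mono (by positivity)
    · exact SchurBound.zero
  refine (SchurBound.sum s h1).mono ?_
  refine (Finset.sum_le_univ_sum_of_nonneg fun i => by positivity).trans ?_
  refine sum_le_of_zone (c := c) (by positivity) (fun j => ?_) fun j hj => ?_
  · split_ifs
    · rfl
    · positivity
  · exact if_neg hj

theorem abs_windowField_le (hh : ∀ i, h i ∈ Set.Icc (0 : ℝ) 1) (c w : ℕ) (j : Fin N) :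
    |windowField c w h j| ≤ 1 := by
  rw [windowField]
  split_ifs
  · rw [abs_of_nonneg (hh j).1]; exact (hh j).2
  · simp

theorem abs_fieldEnergy_leftField_le (hh : ∀ i, h i ∈ Set.Icc (0 : ℝ) 1) (c w : ℕ)
    (σ : Fin N → Bool) :
    |fieldEnergy (leftField (windowField c w h) c) σ| ≤ (2 * w : ℕ) := by
  refine (abs_fieldEnergy_le _ σ).trans ?_
  rw [← mul_one ((2 * w : ℕ) : ℝ)]
  refine sum_le_of_zone (c := c) zero_le_one (fun j => ?_) fun j hj => ?_
  · rw [leftField]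
    split_ifs
    · exact abs_windowField_le hh c w j
    · simp
  · have h0 : windowField c w h j = 0 := if_neg hj
    rw [leftField, h0, ite_self, abs_zero]

/-- The energies of configurations differing only in the window of half-width `w` around the cut
`c` are separated by gaps of size at least `δ`. -/
def GapCondition (c w : ℕ) (δ : ℝ) (h : Fin N → ℝ) : Prop :=
  ∀ σ τ, AgreeOutside c w σ τ → σ ≠ τ →
    δ ≤ |fieldEnergy (windowField c w h) σ - fieldEnergy (windowField c w h) τ|

theorem schurBound_cutDressing (hR : 1 ≤ R) (hV : ∀ i, SupportedOn (V i) (bond R i))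
    (hV1 : ∀ i, opNorm (V i) ≤ 1) (hh : ∀ i, h i ∈ Set.Icc (0 : ℝ) 1) {c w : ℕ} (hw : 1 ≤ w)
    {δ : ℝ} (hδ : 0 < δ) (hδ1 : δ ≤ 1) (hE : GapCondition c w δ h) (k : ℕ) :
    SchurBound (cutDressing (windowField c w h) (windowTerm R c w V) c k)
      ((2 * w : ℕ) * (3 * ((2 * w : ℕ) * 2 ^ R) / δ) ^ k) := by
  refine schurBound_dressing (agreeOutside_equivalence c w)
    (blockDiagonal_sum _ (blockDiagonal_windowTerm hV c w))
    (schurBound_sum_windowTerm hR hV hV1 c w _) (schurBound_sum_windowTerm hR hV hV1 c w _)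
    (by positivity) ?_ (abs_fieldEnergy_leftField_le hh c w) hδ hδ1 hE k
  exact_mod_cast (by omega : 1 ≤ 2 * w)

theorem opNorm_lie_ham_sub_cutCorrection_le (hR : 1 ≤ R)
    (hV : ∀ i, SupportedOn (V i) (bond R i)) (hV1 : ∀ i, opNorm (V i) ≤ 1)
    (hh : ∀ i, h i ∈ Set.Icc (0 : ℝ) 1) {J : ℝ} (hJ : 0 < J) {c n : ℕ} (hn : 1 ≤ n)
    {δ : ℝ} (hδ : 0 < δ) (hδ1 : δ ≤ 1) (hE : GapCondition c ((n + 1) * R) δ h) :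
    opNorm (⁅Ham N J h V, HamCut N J h V c⁆ - ⁅Ham N J h V, cutCorrection R J V c n h⁆)
      ≤ (2 * ((n + 1) * R) : ℕ)
        * (3 * ((2 * ((n + 1) * R) : ℕ) * 2 ^ R) * J / δ) ^ (n + 1) := by
  rw [lie_ham_sub_cutCorrection hR hV J c hn fun σ τ hr hne he => by
    have := hE σ τ hr hne
    rw [he, sub_self, abs_zero] at this
    linarith]
  have hw : 1 ≤ (n + 1) * R := Nat.mul_pos n.succ_pos hR
  generalize (n + 1) * R = w at *
  have h1 := ((schurBound_sum_windowTerm hR hV hV1 c w Finset.univ).lie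
    (schurBound_cutDressing hR hV hV1 hh hw hδ hδ1 hE n) (by positivity)
    (by positivity)).smul (J ^ (n + 1))
  refine (h1.mono ?_).opNorm_le (by positivity)
  rw [abs_of_pos (by positivity)]
  have hK0 : 0 ≤ ((2 * w : ℕ) : ℝ) * 2 ^ R := by positivity
  have hD0 : (0 : ℝ) ≤ (2 * w : ℕ) := by positivity
  generalize ((2 * w : ℕ) : ℝ) * 2 ^ R = K at *
  generalize ((2 * w : ℕ) : ℝ) = D at *
  have h2 : 2 * K ≤ 3 * K / δ := by
    rw [le_div_iff₀ hδ]
    nlinarith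
  calc J ^ (n + 1) * (2 * K * (D * (3 * K / δ) ^ n))
      = J ^ (n + 1) * D * (3 * K / δ) ^ n * (2 * K) := by ring
    _ ≤ J ^ (n + 1) * D * (3 * K / δ) ^ n * (3 * K / δ) := by gcongr
    _ = D * (3 * K * J / δ) ^ (n + 1) := by
      rw [show 3 * K * J / δ = J * (3 * K / δ) by ring, mul_pow, pow_succ (3 * K / δ)]; ring

theorem opNorm_cutCorrection_le (hR : 1 ≤ R)
    (hV : ∀ i, SupportedOn (V i) (bond R i)) (hV1 : ∀ i, opNorm (V i) ≤ 1)
    (hh : ∀ i, h i ∈ Set.Icc (0 : ℝ) 1) {J : ℝ} (hJ : 0 < J) {c n : ℕ}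
    {δ : ℝ} (hδ : 0 < δ) (hδ1 : δ ≤ 1) (hE : GapCondition c ((n + 1) * R) δ h)
    (hx : 3 * ((2 * ((n + 1) * R) : ℕ) * 2 ^ R) * J / δ ≤ 1 / 2) :
    opNorm (cutCorrection R J V c n h)
      ≤ 3 * (2 * ((n + 1) * R) : ℕ) * (3 * ((2 * ((n + 1) * R) : ℕ) * 2 ^ R) * J / δ) := by
  have hw : 1 ≤ (n + 1) * R := Nat.mul_pos n.succ_pos hR
  rw [cutCorrection]
  generalize (n + 1) * R = w at *
  have hD1 : (1 : ℝ) ≤ (2 * w : ℕ) := by exact_mod_cast (by omega : 1 ≤ 2 * w)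
  have hQ := schurBound_cutDressing hR hV hV1 hh hw hδ hδ1 hE
  have hL := schurBound_sum_windowTerm hR hV hV1 c w (Finset.univ.filter fun i => (i : ℕ) < c)
  generalize ((2 * w : ℕ) : ℝ) = D at *
  have hK0 : 0 ≤ D * 2 ^ R := by positivity
  generalize D * 2 ^ R = K at *
  set x := 3 * K * J / δ with hxdef
  have hx0 : 0 ≤ x := by positivity
  have hJK : J * K ≤ D * x := by
    have h1 : J * K ≤ x := by
      rw [hxdef, le_div_iff₀ hδ]
      nlinarith [mul_nonneg hJ.le hK0]
    nlinarith
  have key : ∀ m : ℕ, SchurBound (cutRemainder J (windowField c w h) (windowTerm R c w V) c m)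
      (J * K + 2 * D * x * (1 - (1 / 2) ^ m)) := by
    intro m
    induction m with
    | zero =>
      rw [cutRemainder_zero]
      refine (hL.smul J).mono ?_
      rw [abs_of_pos hJ]
      simp
    | succ m ih =>
      rw [cutRemainder_succ]
      refine (ih.sub ((hQ (m + 1)).smul (J ^ (m + 1)))).mono ?_
      rw [abs_of_pos (by positivity)]
      have e : J ^ (m + 1) * (D * (3 * K / δ) ^ (m + 1)) = D * x * x ^ m := by
        have hx' : x = J * (3 * K / δ) := by rw [hxdef]; ring
        rw [hx', mul_pow, pow_succ, pow_succ]; ring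
      have : x ^ m ≤ (1 / 2) ^ m := pow_le_pow_left₀ hx0 hx m
      have := mul_le_mul_of_nonneg_left this (by positivity : 0 ≤ D * x)
      rw [e, pow_succ]
      linarith
  refine ((key n).mono ?_).opNorm_le (by positivity)
  have : 0 ≤ 2 * D * x * (1 / 2) ^ n := by positivity
  linarith

end Bounds

section Measurability

variable {N : ℕ} {R : ℕ} {V : Fin N → SpinOp N}

theorem measurable_fieldEnergy {f : (Fin N → ℝ) → Fin N → ℝ} (hf : ∀ j, Measurable fun h => f h j)
    (σ : Fin N → Bool) : Measurable fun h => fieldEnergy (f h) σ :=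
  Finset.measurable_fun_sum _ fun j _ => (hf j).mul_const _

theorem measurable_windowField (c w : ℕ) (j : Fin N) :
    Measurable fun h : Fin N → ℝ => windowField c w h j := by
  unfold windowField
  split_ifs
  · exact measurable_pi_apply j
  · exact measurable_const

theorem measurable_leftField {f : (Fin N → ℝ) → Fin N → ℝ} (hf : ∀ j, Measurable fun h => f h j)
    (c : ℕ) (j : Fin N) : Measurable fun h => leftField (f h) c j := by
  unfold leftField
  split_ifs
  · exact hf j
  · exact measurable_const

theorem measurable_lie_apply {Ω ι : Type*} [MeasurableSpace Ω] [Fintype ι] (A : Matrix ι ι ℂ)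
    {B : Ω → Matrix ι ι ℂ} (hB : ∀ σ τ, Measurable fun ω => B ω σ τ) (σ τ : ι) :
    Measurable fun ω => ⁅A, B ω⁆ σ τ := by
  simp only [Ring.lie_def, Matrix.sub_apply, Matrix.mul_apply]
  exact (Finset.measurable_fun_sum _ fun k _ => (hB k τ).const_mul _).sub
    (Finset.measurable_fun_sum _ fun k _ => (hB σ k).mul_const _)

theorem measurable_cutDressing (V : Fin N → SpinOp N) {f : (Fin N → ℝ) → Fin N → ℝ}
    (hf : ∀ j, Measurable fun h => f h j) (c k : ℕ) (σ τ : Fin N → Bool) :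
    Measurable fun h => cutDressing (f h) V c k σ τ := by
  have hE := measurable_fieldEnergy hf
  have hinv : ∀ {B : (Fin N → ℝ) → SpinOp N}, (∀ σ τ, Measurable fun h => B h σ τ) →
      ∀ σ τ, Measurable fun h => invAd (fieldEnergy (f h)) ⁅∑ i, V i, B h⁆ σ τ := by
    intro B hB σ τ
    exact (measurable_lie_apply _ hB σ τ).div
      (Complex.measurable_ofReal.comp ((hE σ).sub (hE τ)))
  have h0 : ∀ σ τ, Measurable fun h => cutDressing (f h) V c 0 σ τ := by
    intro σ τ
    simp only [cutDressing, dressing, Matrix.diagonal_apply]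
    split_ifs
    · exact Complex.measurable_ofReal.comp
        (measurable_fieldEnergy (measurable_leftField hf c) σ)
    · exact measurable_const
  induction k generalizing σ τ with
  | zero => exact h0 σ τ
  | succ k ih =>
    cases k with
    | zero => exact (hinv h0 σ τ).const_sub _
    | succ k => exact (hinv ih σ τ).neg

theorem measurable_hamCut (J : ℝ) (V : Fin N → SpinOp N) {f : (Fin N → ℝ) → Fin N → ℝ}
    (hf : ∀ j, Measurable fun h => f h j) (c : ℕ) (σ τ : Fin N → Bool) :
    Measurable fun h => HamCut N J (f h) V c σ τ := by
  simp only [HamCut, Matrix.sum_apply, Matrix.add_apply, Matrix.smul_apply]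
  refine Finset.measurable_fun_sum _ fun i _ => ?_
  exact ((hf i).smul_const _).add_const _

theorem measurable_cutCorrection (J : ℝ) (V : Fin N → SpinOp N) (c n : ℕ)
    (σ τ : Fin N → Bool) : Measurable fun h => cutCorrection R J V c n h σ τ := by
  have hf := measurable_windowField (N := N) c ((n + 1) * R)
  simp only [cutCorrection, cutRemainder, Matrix.sub_apply, Matrix.sum_apply, Matrix.smul_apply]
  refine (measurable_hamCut J _ hf c σ τ).sub (Finset.measurable_fun_sum _ fun k _ => ?_)
  exact (measurable_cutDressing _ hf c k σ τ).const_smul (J ^ k)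

end Measurability

section Probability

open scoped ENNReal

variable {N : ℕ}

instance isProbabilityMeasure_uniform :
    IsProbabilityMeasure (volume.restrict (Set.Icc (0 : ℝ) 1)) :=
  ⟨by simp⟩

instance isProbabilityMeasure_disorderMeasure : IsProbabilityMeasure (disorderMeasure N) := by
  unfold disorderMeasure; infer_instance

theorem disorderMeasure_linearForm_lt_le (m : Fin N → ℤ) (hm : m ≠ 0) (δ : ℝ) :
    disorderMeasure N {h | |2 * ∑ j, h j * m j| < δ} ≤ ENNReal.ofReal δ := by
  classical
  obtain ⟨i, hi⟩ := Function.ne_iff.mp hm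
  have hmeas : MeasurableSet {h : Fin N → ℝ | |2 * ∑ j, h j * m j| < δ} := by
    refine measurableSet_lt ?_ measurable_const
    fun_prop
  rw [← lintegral_indicator_one hmeas, disorderMeasure]
  have hconst : ENNReal.ofReal δ = ∫⁻ _, ENNReal.ofReal δ
      ∂(Measure.pi fun _ : Fin N => volume.restrict (Set.Icc (0 : ℝ) 1)) := by
    simp
  rw [hconst]
  refine lintegral_le_of_lmarginal_le {i} (measurable_const.indicator hmeas) measurable_const ?_
  intro x
  rw [lmarginal_singleton, lmarginal_singleton]
  set a := ∑ j ∈ Finset.univ.erase i, x j * m j with ha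
  have hsum : ∀ t : ℝ, ∑ j, Function.update x i t j * m j = t * m i + a := by
    intro t
    rw [← Finset.add_sum_erase _ _ (Finset.mem_univ i), Function.update_self, ha]
    congr 1
    refine Finset.sum_congr rfl fun j hj => ?_
    rw [Function.update_of_ne (Finset.ne_of_mem_erase hj)]
  have hmi : (1 : ℝ) ≤ |(m i : ℝ)| := by
    rw [← Int.cast_abs]
    exact_mod_cast Int.one_le_abs hi
  have hmi0 : (m i : ℝ) ≠ 0 := by exact_mod_cast hi
  calc ∫⁻ t, Set.indicator {h : Fin N → ℝ | |2 * ∑ j, h j * m j| < δ} 1 (Function.update x i t)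
        ∂(volume.restrict (Set.Icc (0 : ℝ) 1))
      ≤ ∫⁻ t, Set.indicator {h : Fin N → ℝ | |2 * ∑ j, h j * m j| < δ} 1
          (Function.update x i t) := lintegral_mono' Measure.restrict_le_self le_rfl
    _ ≤ ∫⁻ t, Set.indicator (Metric.ball (-a / m i) (δ / 2)) 1 t := by
        refine lintegral_mono fun t => ?_
        simp only [Set.indicator_apply, Set.mem_ofPred_eq, hsum]
        split_ifs with h1 h2 h2
        · exact le_rfl
        · refine absurd ?_ h2
          rw [Metric.mem_ball, Real.dist_eq]
          have h3 : t * m i + a = m i * (t - -a / m i) := by field_simp; ring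
          rw [h3, abs_mul, abs_mul, abs_two] at h1
          nlinarith [abs_nonneg (t - -a / m i)]
        · exact zero_le_one
        · exact le_rfl
    _ = ENNReal.ofReal δ := by
        rw [lintegral_indicator_one Metric.isOpen_ball.measurableSet, Real.volume_ball]
        congr 1; ring
    _ = _ := by simp

theorem measurableSet_gapCondition (c w : ℕ) (δ : ℝ) :
    MeasurableSet {h : Fin N → ℝ | GapCondition c w δ h} := by
  have hE := measurable_fieldEnergy (measurable_windowField (N := N) c w)
  simp only [GapCondition, Set.ofPred_forall]
  refine MeasurableSet.iInter fun σ => MeasurableSet.iInter fun τ => MeasurableSet.iInter fun _ =>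
    MeasurableSet.iInter fun _ => measurableSet_le measurable_const ?_
  exact ((hE σ).sub (hE τ)).norm

theorem disorderMeasure_not_gapCondition_le (c w : ℕ) (δ : ℝ) :
    disorderMeasure N {h | ¬ GapCondition c w δ h} ≤ 3 ^ (2 * w) * ENNReal.ofReal δ := by
  classical
  let T : Fin N → Finset ℤ := fun j => if j ∈ zone c w then {-1, 0, 1} else {0}
  have hcard : (Fintype.piFinset T).card ≤ 3 ^ (2 * w) := by
    rw [Fintype.card_piFinset]
    have h1 : ∀ j, (T j).card = if j ∈ zone c w then 3 else 1 := by
      intro j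
      simp only [T]
      split_ifs <;> rfl
    simp only [h1]
    rw [Finset.prod_ite, Finset.prod_const, Finset.prod_const_one, mul_one]
    refine Nat.pow_le_pow_right (by norm_num) ?_
    rw [← Set.ncard_coe_finset]
    simpa using ncard_zone_le c w
  have hsub : {h : Fin N → ℝ | ¬ GapCondition c w δ h}
      ⊆ ⋃ m ∈ (Fintype.piFinset T).filter (· ≠ 0), {h | |2 * ∑ j, h j * m j| < δ} := by
    intro h hh
    simp only [GapCondition, Set.mem_ofPred_eq, not_forall, not_le] at hh
    obtain ⟨σ, τ, hr, hne, hlt⟩ := hh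
    let m : Fin N → ℤ := fun j => if σ j = τ j then 0 else if σ j then 1 else -1
    simp only [Set.mem_iUnion]
    refine ⟨m, ?_, ?_⟩
    · rw [Finset.mem_filter, Fintype.mem_piFinset]
      constructor
      · intro j
        simp only [T, m]
        by_cases hj : j ∈ zone c w
        · rw [if_pos hj]; split_ifs <;> simp
        · rw [if_neg hj, if_pos (hr j hj)]; simp
      · intro hm
        apply hne
        funext j
        by_contra hj
        have := congrFun hm j
        simp only [m, if_neg hj, Pi.zero_apply] at this
        split_ifs at this
        omega
    · rw [Set.mem_ofPred_eq, Finset.mul_sum]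
      rw [fieldEnergy_sub] at hlt
      refine lt_of_eq_of_lt (congrArg _ (Finset.sum_congr rfl fun j _ => ?_)) hlt
      by_cases hj : j ∈ zone c w
      · rw [show windowField c w h j = h j from if_pos hj]
        simp only [m]
        cases σ j <;> cases τ j <;> simp <;> ring
      · simp [m, hr j hj]
  refine (measure_mono hsub).trans ((measure_biUnion_finset_le _ _).trans ?_)
  refine (Finset.sum_le_card_nsmul _ _ (ENNReal.ofReal δ) fun m hm =>
    disorderMeasure_linearForm_lt_le m (Finset.mem_filter.mp hm).2 δ).trans ?_
  rw [nsmul_eq_mul]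
  gcongr
  exact_mod_cast (Finset.card_filter_le _ _).trans hcard

theorem disorderMeasure_inter_eq_mul {S T : Finset (Fin N)} (hST : Disjoint S T)
    {A B : Set (Fin N → ℝ)} (hA : MeasurableSet A) (hB : MeasurableSet B)
    (hAS : ∀ h h' : Fin N → ℝ, (∀ j ∈ S, h j = h' j) → h ∈ A → h' ∈ A)
    (hBT : ∀ h h' : Fin N → ℝ, (∀ j ∈ T, h j = h' j) → h ∈ B → h' ∈ B) :
    disorderMeasure N (A ∩ B) = disorderMeasure N A * disorderMeasure N B := by
  classical
  have hind : ProbabilityTheory.iIndepFun (fun (i : Fin N) (h : Fin N → ℝ) => h i)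
      (disorderMeasure N) :=
    ProbabilityTheory.iIndepFun_pi (X := fun _ => id) fun _ => aemeasurable_id
  let ext (U : Finset (Fin N)) (y : U → ℝ) (j : Fin N) : ℝ := if hj : j ∈ U then y ⟨j, hj⟩ else 0
  have hext : ∀ U, Measurable (ext U) := by
    intro U
    refine measurable_pi_lambda _ fun j => ?_
    simp only [ext]
    split_ifs
    · exact measurable_pi_apply _
    · exact measurable_const
  have hpre : ∀ (U : Finset (Fin N)) (C : Set (Fin N → ℝ)),
      (∀ h h' : Fin N → ℝ, (∀ j ∈ U, h j = h' j) → h ∈ C → h' ∈ C) →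
      (fun (h : Fin N → ℝ) (i : U) => h i) ⁻¹' (ext U ⁻¹' C) = C := by
    intro U C hC
    ext h
    constructor <;> refine hC _ _ fun j hj => ?_ <;> simp [ext, hj]
  have := (hind.indepFun_finset S T hST fun i => measurable_pi_apply i).measure_inter_preimage_eq_mul
    _ _ (hext S hA) (hext T hB)
  rwa [hpre S A hAS, hpre T B hBT] at this

theorem disorderMeasure_biInter_le {A : ℕ → Set (Fin N → ℝ)} {S : ℕ → Finset (Fin N)} {p : ℝ≥0∞}
    (hA : ∀ q, MeasurableSet (A q))
    (hAS : ∀ q, ∀ h h' : Fin N → ℝ, (∀ j ∈ S q, h j = h' j) → h ∈ A q → h' ∈ A q)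
    (hp : ∀ q, disorderMeasure N (A q) ≤ p) (Q : ℕ)
    (hS : ∀ q < Q, ∀ q' < q, Disjoint (S q') (S q)) :
    disorderMeasure N (⋂ q ∈ Finset.range Q, A q) ≤ p ^ Q := by
  classical
  induction Q with
  | zero => simp
  | succ Q ih =>
    rw [Finset.range_add_one, Finset.set_biInter_insert, Set.inter_comm,
      disorderMeasure_inter_eq_mul (S := (Finset.range Q).biUnion S) (T := S Q), pow_succ]
    · exact mul_le_mul' (ih fun q hq => hS q (hq.trans Q.lt_succ_self)) (hp Q)
    · rw [Finset.disjoint_biUnion_left]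
      exact fun q hq => hS Q Q.lt_succ_self q (Finset.mem_range.mp hq)
    · exact Finset.measurableSet_biInter _ fun q _ => hA q
    · exact hA Q
    · intro h h' hh hmem
      simp only [Set.mem_iInter] at hmem ⊢
      exact fun q hq => hAS q h h' (fun j hj => hh j (Finset.mem_biUnion.mpr ⟨q, hq, hj⟩))
        (hmem q hq)
    · exact hAS Q

end Probability

section CutSelection

variable {N : ℕ} {R : ℕ} {V : Fin N → SpinOp N}

theorem opNorm_pauliZ_le (i : Fin N) : opNorm (PauliZ i) ≤ 1 := by
  refine SchurBound.opNorm_le (SchurBound.diagonal fun σ => ?_) zero_le_one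
  split_ifs <;> simp

theorem opNorm_hamCut_sub_le (hV1 : ∀ i, opNorm (V i) ≤ 1) {J : ℝ} (hJ : 0 < J) (hJ1 : J ≤ 1)
    {h : Fin N → ℝ} (hh : ∀ i, h i ∈ Set.Icc (0 : ℝ) 1) {a b m : ℕ} (hab : a ≤ b)
    (hm : b ≤ a + m) : opNorm (HamCut N J h V b - HamCut N J h V a) ≤ 2 * m := by
  have hsplit : HamCut N J h V b - HamCut N J h V a
      = ∑ i ∈ Finset.univ.filter fun i : Fin N => a ≤ (i : ℕ) ∧ (i : ℕ) < b,
        (h i • PauliZ i + J • V i) := by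
    rw [HamCut, HamCut, sub_eq_iff_eq_add', Finset.sum_filter, Finset.sum_filter,
      Finset.sum_filter, ← Finset.sum_add_distrib]
    refine Finset.sum_congr rfl fun i _ => ?_
    by_cases h1 : (i : ℕ) < a
    · rw [if_pos h1, if_pos (h1.trans_le hab), if_neg (by omega), add_zero]
    · rw [if_neg h1, zero_add]
      exact if_congr (by omega) rfl rfl
  have hterm : ∀ i, opNorm (h i • PauliZ i + J • V i) ≤ 2 := by
    intro i
    refine (opNorm_add_le _ _).trans ?_
    rw [opNorm_smul_real, opNorm_smul_real, abs_of_pos hJ, abs_of_nonneg (hh i).1]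
    have h1 := mul_le_one₀ (hh i).2 (opNorm_nonneg _) (opNorm_pauliZ_le i)
    have h2 := mul_le_one₀ hJ1 (opNorm_nonneg _) (hV1 i)
    linarith
  have hcard : (Finset.univ.filter fun i : Fin N => a ≤ (i : ℕ) ∧ (i : ℕ) < b).card ≤ m := by
    rw [← Set.ncard_coe_finset]
    simpa using ncard_int_interval_le (N := N) a b m (by exact_mod_cast hm)
  rw [hsplit]
  refine (opNorm_sum_le _ _).trans ((Finset.sum_le_card_nsmul _ _ 2 fun i _ => hterm i).trans ?_)
  rw [nsmul_eq_mul, mul_comm]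
  gcongr

theorem hamL_eq_hamCut (J : ℝ) (h : Fin N → ℝ) (V : Fin N → SpinOp N) (istar : Fin N) :
    HamL N J h V istar = HamCut N J h V (istar + 1) := by
  rw [HamL, HamCut]
  refine Finset.sum_congr (Finset.filter_congr fun i _ => ?_) fun _ _ => rfl
  rw [Fin.le_def, Nat.lt_succ_iff]

theorem gapCondition_congr {c w : ℕ} {δ : ℝ} {h h' : Fin N → ℝ}
    (hh : ∀ j ∈ zone c w, h j = h' j) : GapCondition c w δ h ↔ GapCondition c w δ h' := by
  have : windowField c w h = windowField c w h' := by
    funext j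
    by_cases hj : j ∈ zone c w
    · rw [show windowField c w h j = h j from if_pos hj,
        show windowField c w h' j = h' j from if_pos hj, hh j hj]
    · rw [show windowField c w h j = 0 from if_neg hj,
        show windowField c w h' j = 0 from if_neg hj]
  rw [GapCondition, GapCondition, this]

/-- The probability that the first `Q` of the cuts at distances `0, 2w, 4w, …` to the left of `b`
are all resonant. -/
theorem disorderMeasure_forall_resonant_le (b w : ℕ) (δ : ℝ) (Q : ℕ) :
    disorderMeasure N {h | ∀ q < Q, ¬ (b - q * (2 * w) = 0 ∨ GapCondition (b - q * (2 * w)) w δ h)}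
      ≤ (3 ^ (2 * w) * ENNReal.ofReal δ) ^ Q := by
  classical
  by_cases hpos : ∀ q < Q, b - q * (2 * w) ≠ 0
  · refine (measure_mono ?_).trans (disorderMeasure_biInter_le
      (A := fun q => {h | ¬ GapCondition (b - q * (2 * w)) w δ h})
      (S := fun q => Finset.univ.filter (· ∈ zone (b - q * (2 * w)) w))
      (fun q => (measurableSet_gapCondition _ w δ).compl) ?_
      (fun q => disorderMeasure_not_gapCondition_le _ w δ) Q ?_)
    · intro h hh
      simp only [Set.mem_iInter, Finset.mem_range]
      exact fun q hq hg => hh q hq (Or.inr hg)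
    · intro q h h' hh hg hg'
      exact hg ((gapCondition_congr fun j hj => hh j (by simpa using hj)).mpr hg')
    · intro q hq q' hq'
      rw [Finset.disjoint_left]
      intro j hj hj'
      have hz := (Finset.mem_filter.mp hj).2
      have hz' := (Finset.mem_filter.mp hj').2
      simp only [zone, Set.mem_ofPred_eq] at hz hz'
      have h1 := hpos q hq
      have h2 : (q' + 1) * (2 * w) ≤ q * (2 * w) := Nat.mul_le_mul_right _ hq'
      rw [add_mul, one_mul] at h2
      omega
  · push Not at hpos
    obtain ⟨q, hq, hq0⟩ := hpos
    have : {h : Fin N → ℝ | ∀ q < Q,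
        ¬ (b - q * (2 * w) = 0 ∨ GapCondition (b - q * (2 * w)) w δ h)} = ∅ := by
      rw [Set.eq_empty_iff_forall_notMem]
      exact fun h hh => hh q hq (Or.inl hq0)
    rw [this, measure_empty]
    exact zero_le

theorem measurable_apply_nat {Ω β : Type*} [MeasurableSpace Ω] [MeasurableSpace β]
    {F : ℕ → Ω → β} (hF : ∀ k, Measurable (F k)) {q : Ω → ℕ} (hq : Measurable q) :
    Measurable fun ω => F (q ω) ω :=
  (measurable_from_prod_countable_right (f := fun p : ℕ × Ω => F p.1 p.2) hF).comp
    (hq.prodMk measurable_id)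

theorem exists_transport_operator (hR : 1 ≤ R) (hV : ∀ i, SupportedOn (V i) (bond R i))
    (hV1 : ∀ i, opNorm (V i) ≤ 1) {J : ℝ} (hJ : 0 < J) (hJ1 : J ≤ 1) {n : ℕ} (hn : 1 ≤ n)
    {δ : ℝ} (hδ : 0 < δ) (hδ1 : δ ≤ 1)
    (hx : 3 * ((2 * ((n + 1) * R) : ℕ) * 2 ^ R) * J / δ ≤ 1 / 2) (istar : Fin N) :
    ∃ (O : (Fin N → ℝ) → SpinOp N) (q : (Fin N → ℝ) → ℕ),
      (∀ σ σ', Measurable fun h => O h σ σ') ∧ Measurable q ∧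
      (∀ h : Fin N → ℝ, (∀ i, h i ∈ Set.Icc (0 : ℝ) 1) →
        opNorm (current N J h V istar - Complex.I • (Ham N J h V * O h - O h * Ham N J h V))
          ≤ (2 * ((n + 1) * R) : ℕ)
            * (3 * ((2 * ((n + 1) * R) : ℕ) * 2 ^ R) * J / δ) ^ (n + 1) ∧
        opNorm (O h)
          ≤ 3 * (2 * ((n + 1) * R) : ℕ) * (3 * ((2 * ((n + 1) * R) : ℕ) * 2 ^ R) * J / δ)
            + 2 * (q h * (2 * ((n + 1) * R)) : ℕ)) ∧
      ∀ Q, disorderMeasure N {h | Q ≤ q h}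
        ≤ (3 ^ (2 * ((n + 1) * R)) * ENNReal.ofReal δ) ^ Q := by
  classical
  have hw : 1 ≤ (n + 1) * R := Nat.mul_pos n.succ_pos hR
  have hx0 : 0 ≤ 3 * (((2 * ((n + 1) * R) : ℕ) : ℝ) * 2 ^ R) * J / δ := by positivity
  set w := (n + 1) * R with hwdef
  let b : ℕ := istar + 1
  let good (h : Fin N → ℝ) (q : ℕ) : Prop :=
    b - q * (2 * w) = 0 ∨ GapCondition (b - q * (2 * w)) w δ h
  have hex : ∀ h, ∃ q, good h q := fun h => ⟨b, Or.inl (by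
    have : b * 1 ≤ b * (2 * w) := Nat.mul_le_mul_left _ (by omega)
    omega)⟩
  let q (h : Fin N → ℝ) : ℕ := Nat.find (hex h)
  have hq : ∀ h, good h (q h) := fun h => Nat.find_spec (hex h)
  have hqm : Measurable q := by
    refine measurable_find hex fun k => ?_
    by_cases hk : b - k * (2 * w) = 0
    · simp [good, hk]
    · simpa [good, hk] using measurableSet_gapCondition (b - k * (2 * w)) w δ
  let corr (c : ℕ) (h : Fin N → ℝ) : SpinOp N := if c = 0 then 0 else cutCorrection R J V c n h
  let F (k : ℕ) (h : Fin N → ℝ) : SpinOp N :=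
    HamCut N J h V b - HamCut N J h V (b - k * (2 * w)) + corr (b - k * (2 * w)) h
  refine ⟨fun h => F (q h) h, q, fun σ σ' => ?_, hqm, fun h hh => ⟨?_, ?_⟩, fun Q => ?_⟩
  · have hF : ∀ k, Measurable fun h => F k h σ σ' := by
      intro k
      have hid : ∀ j, Measurable fun h : Fin N → ℝ => h j := measurable_pi_apply
      refine ((measurable_hamCut J V hid b σ σ').sub (measurable_hamCut J V hid _ σ σ')).add ?_
      simp only [corr]
      split_ifs
      · exact measurable_const
      · exact measurable_cutCorrection J V _ n σ σ'
    exact measurable_apply_nat hF hqm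
  · have e : current N J h V istar
        - Complex.I • (Ham N J h V * F (q h) h - F (q h) h * Ham N J h V)
        = Complex.I • (⁅Ham N J h V, HamCut N J h V (b - q h * (2 * w))⁆
          - ⁅Ham N J h V, corr (b - q h * (2 * w)) h⁆) := by
      rw [current, hamL_eq_hamCut, ← Ring.lie_def, ← Ring.lie_def, ← smul_sub]
      simp only [F, lie_add, lie_sub]
      congr 1
      abel
    rw [e, opNorm_smul_complex, Complex.norm_I, one_mul]
    by_cases hc : b - q h * (2 * w) = 0
    · have h0 : HamCut N J h V 0 = 0 := by simp [HamCut]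
      simp only [corr, hc, if_true, h0, lie_zero, sub_zero]
      refine (SchurBound.zero.opNorm_le le_rfl).trans (by positivity)
    · simp only [corr, if_neg hc]
      exact opNorm_lie_ham_sub_cutCorrection_le hR hV hV1 hh hJ hn hδ hδ1
        ((hq h).resolve_left hc)
  · refine (opNorm_add_le _ _).trans ?_
    rw [add_comm]
    refine add_le_add ?_ (opNorm_hamCut_sub_le hV1 hJ hJ1 hh (by omega) (by omega))
    by_cases hc : b - q h * (2 * w) = 0
    · simp only [corr, hc, if_true]
      refine (SchurBound.zero.opNorm_le le_rfl).trans (by positivity)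
    · simp only [corr, if_neg hc]
      exact opNorm_cutCorrection_le hR hV hV1 hh hJ hδ hδ1 ((hq h).resolve_left hc) hx
  · refine (measure_mono fun h hQ k hk => ?_).trans (disorderMeasure_forall_resonant_le b w δ Q)
    exact Nat.find_min (hex h) (lt_of_lt_of_le hk hQ)

end CutSelection

section Asymptotics

open Filter Topology

theorem eventually_window_bounds {R : ℕ} (hR : 1 ≤ R) {β ε : ℝ} (hβ : β ∈ Set.Ioo (0 : ℝ) 1)
    (hε : ε ∈ Set.Ioo (0 : ℝ) 1) : ∀ᶠ L : ℝ in atTop, 1 ≤ L ∧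
      9 * (2 * ((⌈L ^ (1 - ε)⌉₊ + 1) * R) : ℕ)
        * ((2 * ((⌈L ^ (1 - ε)⌉₊ + 1) * R) : ℕ) * 2 ^ R) * Real.exp (-(β / 2) * L) ≤ 1 ∧
      10 ^ (-3 : ℤ) * β / R * L ^ ε
        ≤ β / 2 * L / (2 * ((⌈L ^ (1 - ε)⌉₊ + 1) * R) : ℕ) - Real.log 3 := by
  obtain ⟨hβ0, hβ1⟩ := hβ
  obtain ⟨hε0, hε1⟩ := hε
  have hR0 : (1 : ℝ) ≤ R := by exact_mod_cast hR
  have hexp : ∀ᶠ L : ℝ in atTop,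
      L ^ (2 : ℝ) * Real.exp (-(β / 2) * L) < (324 * (R : ℝ) ^ 2 * 2 ^ R)⁻¹ :=
    (tendsto_rpow_mul_exp_neg_mul_atTop_nhds_zero 2 (β / 2) (by positivity)).eventually_lt_const
      (by positivity)
  filter_upwards [hexp, (tendsto_rpow_atTop hε0).eventually_ge_atTop (40 * R / β),
    eventually_ge_atTop 1] with L hL hLε hL1
  have hL0 : 0 < L := by linarith
  set y := L ^ (1 - ε) with hy
  have hy1 : 1 ≤ y := Real.one_le_rpow hL1 (by linarith)
  have hyL : y ≤ L := by
    have := Real.rpow_le_rpow_of_exponent_le hL1 (by linarith : 1 - ε ≤ 1)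
    rwa [Real.rpow_one] at this
  have hD : ((2 * ((⌈y⌉₊ + 1) * R) : ℕ) : ℝ) ≤ 6 * R * y := by
    have := Nat.ceil_lt_add_one (by linarith : 0 ≤ y)
    push_cast
    nlinarith
  have hD0 : (0 : ℝ) < (2 * ((⌈y⌉₊ + 1) * R) : ℕ) := by
    have : 0 < 2 * ((⌈y⌉₊ + 1) * R) := by positivity
    exact_mod_cast this
  generalize ((2 * ((⌈y⌉₊ + 1) * R) : ℕ) : ℝ) = D at *
  have hLy : L = L ^ ε * y := by
    rw [hy, ← Real.rpow_add hL0, add_sub_cancel, Real.rpow_one]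
  refine ⟨hL1, ?_, ?_⟩
  · have hDL : D ≤ 6 * R * L := hD.trans (by gcongr)
    rw [Real.rpow_two] at hL
    calc 9 * D * (D * 2 ^ R) * Real.exp (-(β / 2) * L)
        ≤ 9 * (6 * R * L) * ((6 * R * L) * 2 ^ R) * Real.exp (-(β / 2) * L) := by gcongr
      _ = (324 * (R : ℝ) ^ 2 * 2 ^ R) * (L ^ 2 * Real.exp (-(β / 2) * L)) := by ring
      _ ≤ (324 * (R : ℝ) ^ 2 * 2 ^ R) * (324 * (R : ℝ) ^ 2 * 2 ^ R)⁻¹ := by gcongr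
      _ = 1 := mul_inv_cancel₀ (by positivity)
  · have h1 : β / 2 * L ^ ε / (6 * R) ≤ β / 2 * L / D := by
      rw [div_le_div_iff₀ (by positivity) hD0]
      calc β / 2 * L ^ ε * D ≤ β / 2 * L ^ ε * (6 * R * y) := by gcongr
        _ = β / 2 * (L ^ ε * y) * (6 * R) := by ring
        _ = β / 2 * L * (6 * R) := by rw [← hLy]
    have h3 : Real.log 3 ≤ 2 := by
      have := Real.log_le_sub_one_of_pos (by norm_num : (0 : ℝ) < 3)
      linarith
    have h4 : 40 ≤ β / R * L ^ ε := by
      rw [div_le_iff₀ hβ0] at hLε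
      rw [div_mul_eq_mul_div, le_div_iff₀ (by positivity)]
      linarith
    have e1 : β / 2 * L ^ ε / (6 * R) = β / R * L ^ ε / 12 := by field_simp; norm_num
    have e2 : 10 ^ (-3 : ℤ) * β / R * L ^ ε = β / R * L ^ ε / 1000 := by norm_num; ring
    rw [e1] at h1
    rw [e2]
    linarith

end Asymptotics

end SlowTransport

/-- Theorem 2 (Slow transport): for strong disorder (`J ≤ J_*`), the energy current through any
fiducial site is, up to an error of size `exp(−((1−β)/4)(log(1/J))^{2−ε})`, of the form
`i[H,O]` for a bounded observable `O` with `‖O‖ ≤ J^{(1−β)/(8R)} + 2ℓ`, where the random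
integer `ℓ` satisfies `Prob(ℓ ≥ ℓ₀) ≤ exp(−c₀(log(1/J))^ε ℓ₀)` with `c₀ = 10⁻³β/R`. -/
theorem slow_transport (R : ℕ) (hR : 1 ≤ R)
    (β ε : ℝ) (hβ : β ∈ Set.Ioo (0 : ℝ) 1) (hε : ε ∈ Set.Ioo (0 : ℝ) 1) :
    ∃ Jstar : ℝ, 0 < Jstar ∧
      ∀ J : ℝ, 0 < J → J ≤ Jstar →
      ∀ N : ℕ, 1 ≤ N →
      ∀ istar : Fin N,
      ∀ V : Fin N → SpinOp N,
        (∀ i : Fin N,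
          SupportedOn (V i) {j : Fin N | (i : ℤ) ≤ (j : ℤ) ∧ (j : ℤ) ≤ (i : ℤ) + R - 1} ∧
          opNorm (V i) ≤ 1) →
      ∃ (O : (Fin N → ℝ) → SpinOp N) (ℓ : (Fin N → ℝ) → ℕ),
        -- measurability in the disorder
        (∀ σ σ' : Fin N → Bool, Measurable fun h => O h σ σ') ∧
        Measurable ℓ ∧
        -- pointwise bounds, for disorder configurations in [0,1]^N
        (∀ h : Fin N → ℝ, (∀ i, h i ∈ Set.Icc (0 : ℝ) 1) →
          opNorm (current N J h V istar -
              Complex.I • (Ham N J h V * O h - O h * Ham N J h V)) ≤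
            Real.exp (-((1 - β) / 4) * Real.log (1 / J) ^ ((2 : ℝ) - ε)) ∧
          opNorm (O h) ≤ J ^ ((1 - β) / (8 * R)) + 2 * ℓ h) ∧
        -- tail bound on the random size ℓ
        (∀ ℓ₀ : ℕ, 1 ≤ ℓ₀ →
          disorderMeasure N {h | ℓ₀ ≤ ℓ h} ≤
            ENNReal.ofReal
              (Real.exp (-(10 ^ (-3 : ℤ) * β / R) * Real.log (1 / J) ^ ε * ℓ₀))) := by
  obtain ⟨L₀, hL₀⟩ := Filter.eventually_atTop.mp (eventually_window_bounds hR hβ hε)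
  obtain ⟨hβ0, hβ1⟩ := hβ
  obtain ⟨hε0, hε1⟩ := hε
  refine ⟨Real.exp (-L₀), Real.exp_pos _, fun J hJ hJL N _ istar V hV => ?_⟩
  set L := Real.log (1 / J) with hLdef
  have hlog : Real.log J = -L := by rw [hLdef, one_div, Real.log_inv, neg_neg]
  have hJe : J = Real.exp (-L) := by rw [← hlog, Real.exp_log hJ]
  have hL : L₀ ≤ L := by
    rw [hJe, Real.exp_le_exp] at hJL
    linarith
  obtain ⟨hL1, hsmall, hrate⟩ := hL₀ L hL
  have hL0 : 0 < L := by linarith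
  have hR0 : (1 : ℝ) ≤ R := by exact_mod_cast hR
  have hJ1 : J ≤ 1 := by rw [hJe, Real.exp_le_one_iff]; linarith
  set n := ⌈L ^ (1 - ε)⌉₊ with hn
  have hn1 : 1 ≤ n := Nat.one_le_ceil_iff.mpr (by positivity)
  have hnL : L ^ (1 - ε) ≤ n := Nat.le_ceil _
  set δ := Real.exp (-(β / 2) * L) with hδdef
  have hδ0 : 0 < δ := Real.exp_pos _
  have hδ1 : δ ≤ 1 := by rw [hδdef, Real.exp_le_one_iff]; nlinarith
  have hJδ : J / δ = δ * Real.exp (-(1 - β) * L) := by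
    rw [hδdef, hJe, ← Real.exp_sub, ← Real.exp_add]
    congr 1; ring
  have hDpos : 1 ≤ 2 * ((n + 1) * R) := by
    have : 0 < 2 * ((n + 1) * R) := by positivity
    exact this
  have hD1 : (1 : ℝ) ≤ (2 * ((n + 1) * R) : ℕ) := by exact_mod_cast hDpos
  have hDx : 3 * ((2 * ((n + 1) * R) : ℕ) : ℝ)
      * (3 * ((2 * ((n + 1) * R) : ℕ) * 2 ^ R) * J / δ) ≤ Real.exp (-(1 - β) * L) := by
    calc _ = 9 * ((2 * ((n + 1) * R) : ℕ) : ℝ) * ((2 * ((n + 1) * R) : ℕ) * 2 ^ R) * (J / δ) := by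
          ring
      _ = 9 * ((2 * ((n + 1) * R) : ℕ) : ℝ) * ((2 * ((n + 1) * R) : ℕ) * 2 ^ R) * δ
            * Real.exp (-(1 - β) * L) := by rw [hJδ]; ring
      _ ≤ 1 * Real.exp (-(1 - β) * L) := by gcongr
      _ = _ := one_mul _
  have hexp1 : Real.exp (-(1 - β) * L) ≤ 1 := by rw [Real.exp_le_one_iff]; nlinarith
  have hx0 : 0 ≤ 3 * (((2 * ((n + 1) * R) : ℕ) : ℝ) * 2 ^ R) * J / δ := by positivity
  have hx : 3 * (((2 * ((n + 1) * R) : ℕ) : ℝ) * 2 ^ R) * J / δ ≤ 1 / 2 := by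
    have h2 : (2 : ℝ) ≤ (2 * ((n + 1) * R) : ℕ) := by
      have : 2 ≤ 2 * ((n + 1) * R) := by
        have : 0 < (n + 1) * R := by positivity
        omega
      exact_mod_cast this
    nlinarith
  obtain ⟨O, q, hO, hq, hbounds, htail⟩ := exists_transport_operator hR (fun i => (hV i).1)
    (fun i => (hV i).2) hJ hJ1 hn1 hδ0 hδ1 hx istar
  generalize 3 * (((2 * ((n + 1) * R) : ℕ) : ℝ) * 2 ^ R) * J / δ = x at *
  generalize 2 * ((n + 1) * R) = D at *
  refine ⟨O, fun h => q h * D, hO, hq.mul_const D, fun h hh => ?_, fun ℓ₀ hℓ₀ => ?_⟩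
  · obtain ⟨h1, h2⟩ := hbounds h hh
    refine ⟨h1.trans ?_, h2.trans ?_⟩
    · calc (D : ℝ) * x ^ (n + 1) ≤ (D : ℝ) ^ (n + 1) * x ^ (n + 1) := by
            gcongr
            exact le_self_pow₀ hD1 n.succ_ne_zero
        _ = (D * x) ^ (n + 1) := (mul_pow _ _ _).symm
        _ ≤ Real.exp (-(1 - β) * L) ^ (n + 1) := by
            gcongr
            nlinarith [mul_nonneg (zero_le_one.trans hD1) hx0]
        _ = Real.exp ((n + 1 : ℕ) * (-(1 - β) * L)) := (Real.exp_nat_mul _ _).symm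
        _ ≤ _ := by
            rw [Real.exp_le_exp]
            have e : L ^ (2 - ε) = L ^ (1 - ε) * L := by
              rw [show 2 - ε = (1 - ε) + 1 by ring, Real.rpow_add hL0, Real.rpow_one]
            have h3 : L ^ (2 - ε) ≤ n * L := by rw [e]; gcongr
            have h4 : 0 ≤ L ^ (2 - ε) := by positivity
            push_cast
            nlinarith
    · push_cast
      gcongr
      refine hDx.trans ?_
      rw [Real.rpow_def_of_pos hJ, hlog, Real.exp_le_exp]
      have h3 : (1 - β) / (8 * R) ≤ 1 - β := div_le_self (by linarith) (by linarith)
      nlinarith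
  · set Q := ℓ₀ ⌈/⌉ D with hQ
    have hsub : {h | ℓ₀ ≤ q h * D} ⊆ {h | Q ≤ q h} := by
      intro h hh
      rw [Set.mem_ofPred_eq, hQ, ceilDiv_le_iff_le_mul hDpos, mul_comm]
      exact hh
    have hQD : (ℓ₀ : ℝ) ≤ D * Q := by exact_mod_cast le_smul_ceilDiv hDpos
    refine (measure_mono hsub).trans ((htail Q).trans ?_)
    have h3 : (3 : ENNReal) ^ D = ENNReal.ofReal (3 ^ D) := by
      rw [ENNReal.ofReal_pow (by norm_num)]; norm_num
    rw [h3, ← ENNReal.ofReal_mul (by positivity), ← ENNReal.ofReal_pow (by positivity)]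
    refine ENNReal.ofReal_le_ofReal ?_
    have e3 : (3 : ℝ) ^ D = Real.exp (D * Real.log 3) := by
      rw [Real.exp_nat_mul, Real.exp_log (by norm_num)]
    rw [e3, hδdef, ← Real.exp_add, ← Real.exp_nat_mul, Real.exp_le_exp]
    set s := β / 2 * L / D - Real.log 3 with hs
    have hs0 : 0 ≤ s := le_trans (by positivity) hrate
    have e4 : D * Real.log 3 + -(β / 2) * L = -(D * s) := by
      rw [hs]; field_simp; ring
    rw [e4]
    calc (Q : ℝ) * -(D * s) = -(s * (D * Q)) := by ring
      _ ≤ -(10 ^ (-3 : ℤ) * β / R * L ^ ε * ℓ₀) := by gcongr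
      _ = _ := by ring
end

section
/- Let B and C be complex matrices indexed by a finite type ι, and let B∘C denote their entrywise (Hadamard) product, (B∘C)_{ij} = B_{ij} C_{ij}. Then ‖B∘C‖ ≤ ‖B‖ · max_i (Σ_j |C_{ij}|²)^{1/2}. -/
/-- The ℓ² norm of each column of a matrix is at most its operator norm. -/
theorem sum_norm_sq_col_le_opNorm_sq {ι : Type*} [Fintype ι] [DecidableEq ι]
    (B : Matrix ι ι ℂ) (j : ι) : ∑ i, ‖B i j‖ ^ 2 ≤ opNorm B ^ 2 := by
  have h := (Matrix.toEuclideanCLM (𝕜 := ℂ) B).le_opNorm (EuclideanSpace.single j 1)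
  rw [PiLp.norm_single, norm_one, mul_one] at h
  have h' := pow_le_pow_left₀ (norm_nonneg _) h 2
  rw [EuclideanSpace.norm_sq_eq] at h'
  simpa [Matrix.ofLp_toEuclideanCLM, opNorm] using h'

/-- Cauchy–Schwarz for a row of the Hadamard product applied to a vector. -/
theorem norm_sq_hadamard_mulVec_le {ι : Type*} [Fintype ι]
    (B C : Matrix ι ι ℂ) (x : ι → ℂ) (i : ι) :
    ‖(Matrix.hadamard B C).mulVec x i‖ ^ 2 ≤
      (∑ j, ‖C i j‖ ^ 2) * ∑ j, ‖B i j‖ ^ 2 * ‖x j‖ ^ 2 := by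
  have h : ‖(Matrix.hadamard B C).mulVec x i‖ ≤ ∑ j, ‖C i j‖ * (‖B i j‖ * ‖x j‖) := by
    refine (norm_sum_le _ _).trans (Finset.sum_le_sum fun j _ => le_of_eq ?_)
    simp only [Matrix.hadamard_apply, norm_mul]
    ring
  refine (pow_le_pow_left₀ (norm_nonneg _) h 2).trans ?_
  simpa only [mul_pow] using
    Finset.sum_mul_sq_le_sq_mul_sq Finset.univ (fun j => ‖C i j‖) (fun j => ‖B i j‖ * ‖x j‖)

/-- Schur's bound on the operator norm of a Hadamard (entrywise) product:
`‖B∘C‖ ≤ ‖B‖ · max_i (Σ_j |C_{ij}|²)^{1/2}`. -/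
theorem hadamard_opNorm_le {ι : Type*} [Fintype ι] [DecidableEq ι] (B C : Matrix ι ι ℂ) :
    opNorm (Matrix.hadamard B C) ≤ opNorm B * ⨆ i, Real.sqrt (∑ j, ‖C i j‖ ^ 2) := by
  set M := ⨆ i, Real.sqrt (∑ j, ‖C i j‖ ^ 2)
  have hM0 : 0 ≤ M := Real.iSup_nonneg fun i => Real.sqrt_nonneg _
  have hrow (i : ι) : ∑ j, ‖C i j‖ ^ 2 ≤ M ^ 2 :=
    (Real.sqrt_le_iff.1
      (le_ciSup (f := fun i => Real.sqrt (∑ j, ‖C i j‖ ^ 2)) (Set.finite_range _).bddAbove i)).2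
  have hB0 : 0 ≤ opNorm B := norm_nonneg _
  refine ContinuousLinearMap.opNorm_le_bound _ (mul_nonneg hB0 hM0) fun x => ?_
  refine (sq_le_sq₀ (norm_nonneg _) (by positivity)).1 ?_
  rw [mul_pow, EuclideanSpace.norm_sq_eq, EuclideanSpace.norm_sq_eq x, Matrix.ofLp_toEuclideanCLM]
  calc ∑ i, ‖(Matrix.hadamard B C).mulVec x.ofLp i‖ ^ 2
      ≤ ∑ i, M ^ 2 * ∑ j, ‖B i j‖ ^ 2 * ‖x j‖ ^ 2 :=
        Finset.sum_le_sum fun i _ => (norm_sq_hadamard_mulVec_le B C x.ofLp i).trans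
          (mul_le_mul_of_nonneg_right (hrow i) (by positivity))
    _ = M ^ 2 * ∑ j, (∑ i, ‖B i j‖ ^ 2) * ‖x j‖ ^ 2 := by
        rw [← Finset.mul_sum, Finset.sum_comm]
        simp_rw [Finset.sum_mul]
    _ ≤ M ^ 2 * ∑ j, opNorm B ^ 2 * ‖x j‖ ^ 2 := by
        gcongr with j
        exact sum_norm_sq_col_le_opNorm_sq B j
    _ = (opNorm B * M) ^ 2 * ∑ j, ‖x j‖ ^ 2 := by
        rw [← Finset.mul_sum]
        ring
end

section
/- Fix integers R ≥ 1, k ≥ 1, i ∈ ℤ, and positive integers m_1, …, m_k, and set m = m_1 + ⋯ + m_k. Then the number of k-tuples (I_1, …, I_k) of intervals in ℤ such that |I_p| = m_p R for each p = 1, …, k, such that I_j ∩ (I_1 ∪ ⋯ ∪ I_{j−1}) ≠ ∅ for each 2 ≤ j ≤ k, and such that min(I_1 ∪ ⋯ ∪ I_k) = i, is at most m · R^k · m!/(m − k + 1)!. -/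
open Finset

/-- The partial sums `m₁ + ⋯ + m_j`, over `Iic j`, grow by at least `m j` from any earlier index. -/
lemma sum_Iic_add_le_of_lt {k : ℕ} (m : Fin k → ℕ) {s j : Fin k} (h : s < j) :
    ∑ p ∈ Iic s, m p + m j ≤ ∑ p ∈ Iic j, m p := by
  have hj : j ∉ Iic s := by simpa using h
  rw [add_comm, ← sum_insert hj]
  refine sum_le_sum_of_subset fun x hx => ?_
  simp only [mem_insert, mem_Iic] at hx ⊢
  rcases hx with rfl | hx
  · exact le_rfl
  · exact hx.trans h.le

lemma sum_Iic_add_le_sum {k : ℕ} (m : Fin k → ℕ) (hm : ∀ p, 1 ≤ m p) (j : Fin k) :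
    ∑ p ∈ Iic j, m p + (k - 1 - j) ≤ ∑ p, m p := by
  have hcard : k - 1 - j ≤ ∑ p ∈ Ioi j, m p := by
    rw [← Fin.card_Ioi, card_eq_sum_ones]
    exact sum_le_sum fun p _ => hm p
  have hdisj : Disjoint (Iic j) (Ioi j) := by
    rw [Finset.disjoint_left]
    intro x hx
    simpa using hx
  calc _ ≤ ∑ p ∈ Iic j, m p + ∑ p ∈ Ioi j, m p := by gcongr
    _ = ∑ p ∈ Iic j ∪ Ioi j, m p := (sum_union hdisj).symm
    _ ≤ _ := sum_le_sum_of_subset (subset_univ _)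

/-- The intervals `[a p, a p + ℓ p - 1]` form a chain: each one after the first meets an
earlier one. -/
def IsIntervalChain {k : ℕ} (ℓ : Fin k → ℕ) (a : Fin k → ℤ) : Prop :=
  ∀ j : Fin k, 0 < (j : ℕ) → ∃ p < j, a j ≤ a p + ℓ p - 1 ∧ a p ≤ a j + ℓ j - 1

/-- The first `j` intervals of a chain lie in an interval of length `ℓ₁ + ⋯ + ℓ_j`. -/
lemma IsIntervalChain.add_sub_le {k : ℕ} {ℓ : Fin k → ℕ} {a : Fin k → ℤ}
    (h : IsIntervalChain ℓ a) (j : Fin k) :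
    ∀ p ≤ j, ∀ q ≤ j, a p + ℓ p - a q ≤ ((∑ r ∈ Iic j, ℓ r : ℕ) : ℤ) := by
  induction j using WellFoundedLT.induction with
  | ind j ih =>
  have hspan : ∀ p < j, ∀ q < j,
      a p + ℓ p - a q + ℓ j ≤ ((∑ r ∈ Iic j, ℓ r : ℕ) : ℤ) := by
    intro p hp q hq
    have h1 := ih (max p q) (max_lt hp hq) p (le_max_left _ _) q (le_max_right _ _)
    have h2 := sum_Iic_add_le_of_lt ℓ (max_lt hp hq)
    omega
  intro p hp q hq
  rcases hp.eq_or_lt with rfl | hp <;> rcases hq.eq_or_lt with rfl | hq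
  · have := single_le_sum (f := ℓ) (fun _ _ => Nat.zero_le _) (mem_Iic.2 (le_refl q))
    omega
  · obtain ⟨r, hr, h1, -⟩ := h p (by have := Fin.lt_def.1 hq; omega)
    have := hspan r hr q hq
    omega
  · obtain ⟨r, hr, -, h1⟩ := h q (by have := Fin.lt_def.1 hp; omega)
    have := hspan p hp r hr
    omega
  · have := hspan p hp q hq
    omega

/-- Starting points of interval chains whose union has minimum `i`. -/
def chainStarts {k : ℕ} (ℓ : Fin k → ℕ) (i : ℤ) : Set (Fin k → ℤ) :=
  {a | IsIntervalChain ℓ a ∧ (∃ p, a p = i) ∧ ∀ p, i ≤ a p}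

/-- A chain is determined by the positions of its intervals relative to the minimum of the
preceding ones. -/
lemma chainStarts_finite_and_ncard_le {n : ℕ} (ℓ : Fin (n + 1) → ℕ) (i : ℤ) :
    (chainStarts ℓ i).Finite ∧
      (chainStarts ℓ i).ncard ≤ ∏ j : Fin n, ∑ r ∈ Iic j.succ, ℓ r := by
  have hmin : ∀ (a : Fin (n + 1) → ℤ) (j : Fin n),
      ∃ q < j.succ, ∀ p < j.succ, a q ≤ a p := by
    intro a j
    obtain ⟨q, hq, h⟩ := exists_min_image (Iio j.succ) a ⟨0, by simp⟩
    exact ⟨q, by simpa using hq, fun p hp => h p (by simpa using hp)⟩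
  choose q hq hle using hmin
  let code : (Fin (n + 1) → ℤ) → Fin n → ℤ :=
    fun a j => a j.succ - a (q a j) + ℓ j.succ - 1
  let T : Finset (Fin n → ℤ) :=
    Fintype.piFinset fun j => Ico 0 ((∑ r ∈ Iic j.succ, ℓ r : ℕ) : ℤ)
  have hmaps : ∀ a ∈ chainStarts ℓ i, code a ∈ (T : Set (Fin n → ℤ)) := by
    intro a ha
    simp only [T, mem_coe, Fintype.mem_piFinset, Finset.mem_Ico, code]
    intro j
    obtain ⟨p, hp, -, h⟩ := ha.1 j.succ (by simp)
    have h1 := hle a j p hp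
    have h2 := ha.1.add_sub_le j.succ j.succ le_rfl (q a j) (hq a j).le
    omega
  have hinj : Set.InjOn code (chainStarts ℓ i) := by
    intro a ha b hb hab
    have hshift : ∀ j, a j - b j = a 0 - b 0 := by
      intro j
      induction j using WellFoundedLT.induction with
      | ind j ih =>
      cases j using Fin.cases with
      | zero => rfl
      | succ j =>
        have h := congrFun hab j
        simp only [code] at h
        have h1 := ih _ (hq a j)
        have h2 := ih _ (hq b j)
        have h3 := hle a j _ (hq b j)
        have h4 := hle b j _ (hq a j)
        omega
    obtain ⟨-, ⟨p, hp⟩, hai⟩ := ha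
    obtain ⟨-, ⟨r, hr⟩, hbi⟩ := hb
    funext j
    have := hshift j
    have := hshift p
    have := hshift r
    have := hai r
    have := hbi p
    omega
  refine ⟨Set.Finite.of_injOn hmaps hinj T.finite_toSet, ?_⟩
  refine (Set.ncard_le_ncard_of_injOn code hmaps hinj T.finite_toSet).trans ?_
  rw [Set.ncard_coe_finset]
  simp [T, -Nat.cast_sum]

/-- The product of the partial sums of positive integers `m₀, …, m_n` with total `m`, the first
one omitted, is at most `m! / (m - n)!`. -/
lemma factorial_mul_prod_sum_Iic_le {n : ℕ} (m : Fin (n + 1) → ℕ) (hm : ∀ p, 1 ≤ m p) :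
    (∑ p, m p - n).factorial * ∏ j : Fin n, ∑ r ∈ Iic j.succ, m r
      ≤ (∑ p, m p).factorial := by
  have hn : n ≤ ∑ p, m p := by
    have := sum_Iic_add_le_sum m hm 0
    simp only [Fin.val_zero] at this
    omega
  calc _ ≤ (∑ p, m p - n).factorial * ∏ j : Fin n, (∑ p, m p - n + 1 + j) := by
        gcongr with j
        have := sum_Iic_add_le_sum m hm j.succ
        simp only [Fin.val_succ] at this
        omega
    _ = (∑ p, m p).factorial := by
        rw [Fin.prod_univ_eq_prod_range (fun j => ∑ p, m p - n + 1 + j) n,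
          ← Nat.ascFactorial_eq_prod_range, Nat.factorial_mul_ascFactorial,
          Nat.sub_add_cancel hn]

/-- Counting the sequences of intervals appearing in the combinatorial estimate:
the number of `k`-tuples of integer intervals of prescribed lengths `m_p R`, each meeting the
union of the previous ones, and whose union has minimum `i`, is at most
`m · R^k · m!/(m−k+1)!` where `m = m₁ + ⋯ + m_k`. -/
theorem interval_tuple_count (R k : ℕ) (hR : 1 ≤ R) (hk : 1 ≤ k) (i : ℤ)
    (m : Fin k → ℕ) (hm : ∀ p, 1 ≤ m p) :
    (setOf fun I : Fin k → Finset ℤ =>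
        (∀ p : Fin k, ∃ a : ℤ, I p = Finset.Icc a (a + ((m p * R : ℕ) : ℤ) - 1)) ∧
        (∀ j : Fin k, 0 < (j : ℕ) →
          (I j ∩ (Finset.univ.filter fun p => p < j).biUnion I).Nonempty) ∧
        i ∈ Finset.univ.biUnion I ∧ ∀ x ∈ Finset.univ.biUnion I, i ≤ x).Finite ∧
    (Nat.card (setOf fun I : Fin k → Finset ℤ =>
        (∀ p : Fin k, ∃ a : ℤ, I p = Finset.Icc a (a + ((m p * R : ℕ) : ℤ) - 1)) ∧
        (∀ j : Fin k, 0 < (j : ℕ) →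
          (I j ∩ (Finset.univ.filter fun p => p < j).biUnion I).Nonempty) ∧
        i ∈ Finset.univ.biUnion I ∧ ∀ x ∈ Finset.univ.biUnion I, i ≤ x) : ℝ)
      ≤ (∑ p, m p) * (R : ℝ) ^ k *
          (Nat.factorial (∑ p, m p)) / (Nat.factorial ((∑ p, m p) - k + 1)) := by
  obtain ⟨n, rfl⟩ : ∃ n, k = n + 1 := ⟨k - 1, by omega⟩
  set S := setOf fun I : Fin (n + 1) → Finset ℤ =>
        (∀ p : Fin (n + 1), ∃ a : ℤ, I p = Finset.Icc a (a + ((m p * R : ℕ) : ℤ) - 1)) ∧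
        (∀ j : Fin (n + 1), 0 < (j : ℕ) →
          (I j ∩ (Finset.univ.filter fun p => p < j).biUnion I).Nonempty) ∧
        i ∈ Finset.univ.biUnion I ∧ ∀ x ∈ Finset.univ.biUnion I, i ≤ x
  let ℓ : Fin (n + 1) → ℕ := fun p => m p * R
  have hℓ : ∀ p, 1 ≤ ℓ p := fun p => Nat.mul_pos (hm p) hR
  have hsub : S ⊆ Set.image (fun a p => Finset.Icc (a p) (a p + (ℓ p : ℤ) - 1))
      (chainStarts ℓ i) := by
    rintro I ⟨hI, hmeet, hi, hmin⟩
    choose a ha using hI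
    replace ha : ∀ p, I p = Finset.Icc (a p) (a p + (ℓ p : ℤ) - 1) := ha
    have hstart : ∀ p, i ≤ a p := fun p => hmin _ <| by
      have := hℓ p
      simp only [mem_biUnion, mem_univ, true_and]
      exact ⟨p, by rw [ha, Finset.mem_Icc]; constructor <;> omega⟩
    refine ⟨a, ⟨fun j hj => ?_, ?_, hstart⟩, funext fun p => (ha p).symm⟩
    · obtain ⟨x, hx⟩ := hmeet j hj
      simp only [mem_inter, mem_biUnion, mem_filter, mem_univ, true_and] at hx
      obtain ⟨hxj, p, hp, hxp⟩ := hx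
      rw [ha, Finset.mem_Icc] at hxj hxp
      exact ⟨p, hp, by omega, by omega⟩
    · simp only [mem_biUnion, mem_univ, true_and] at hi
      obtain ⟨p, hp⟩ := hi
      rw [ha, Finset.mem_Icc] at hp
      exact ⟨p, le_antisymm hp.1 (hstart p)⟩
  obtain ⟨hfin, hcard⟩ := chainStarts_finite_and_ncard_le ℓ i
  refine ⟨(hfin.image _).subset hsub, ?_⟩
  have hprod : ∏ j : Fin n, ∑ r ∈ Iic j.succ, ℓ r
      = (∏ j : Fin n, ∑ r ∈ Iic j.succ, m r) * R ^ n := by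
    simp [ℓ, ← sum_mul, prod_mul_distrib]
  have hcount : Nat.card S ≤ (∏ j : Fin n, ∑ r ∈ Iic j.succ, m r) * R ^ n := by
    rw [Nat.card_coe_set_eq, ← hprod]
    exact (Set.ncard_le_ncard hsub (hfin.image _)).trans ((Set.ncard_image_le hfin).trans hcard)
  have hpos : n + 1 ≤ ∑ p, m p := by
    simpa using sum_le_sum (s := univ) fun p _ => hm p
  have hsubn : ∑ p, m p - (n + 1) + 1 = ∑ p, m p - n := by omega
  rw [hsubn, le_div_iff₀ (by positivity)]
  have hnat : Nat.card S * (∑ p, m p - n).factorial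
      ≤ (∑ p, m p) * R ^ (n + 1) * (∑ p, m p).factorial := by
    calc _ ≤ (∏ j : Fin n, ∑ r ∈ Iic j.succ, m r) * R ^ n * (∑ p, m p - n).factorial := by
          gcongr
      _ = R ^ n * ((∑ p, m p - n).factorial * ∏ j : Fin n, ∑ r ∈ Iic j.succ, m r) := by ring
      _ ≤ R ^ n * (∑ p, m p).factorial := by
          gcongr
          exact factorial_mul_prod_sum_Iic_le m hm
      _ ≤ (∑ p, m p) * R ^ (n + 1) * (∑ p, m p).factorial := by
          gcongr
          calc R ^ n ≤ R ^ (n + 1) := Nat.pow_le_pow_right hR n.le_succ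
            _ ≤ _ := Nat.le_mul_of_pos_left _ (by omega)
  exact_mod_cast hnat
end

section
/- Let B be an operator on ℂ^{d_X} ⊗ ℂ^{d_Y}. Then ‖B − (tr_Y B) ⊗ 1_{d_Y}‖ ≤ sup{ ‖B(1_{d_X} ⊗ O) − (1_{d_X} ⊗ O)B‖ : O a d_Y × d_Y complex matrix with ‖O‖ ≤ 1 }. -/
open scoped Kronecker

/-- The normalized partial trace over the second tensor factor. -/
noncomputable def ptrY {dX dY : ℕ} (B : Matrix (Fin dX × Fin dY) (Fin dX × Fin dY) ℂ) :
    Matrix (Fin dX) (Fin dX) ℂ :=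
  fun x x' => (1 / (dY : ℂ)) * ∑ y, B (x, y) (x', y)

open scoped Matrix.Norms.L2Operator

/-- The signed shift sending `v` to `i ↦ s i * v (i + a)`. -/
def signedShift {Y : Type*} [DecidableEq Y] [Add Y] (a : Y) (s : Y → ℤˣ) : Matrix Y Y ℂ :=
  Matrix.of fun i j => if j = i + a then ((s i : ℤ) : ℂ) else 0

lemma intUnit_mul_self_cast (u : ℤˣ) : ((u : ℤ) : ℂ) * ((u : ℤ) : ℂ) = 1 := by
  rcases Int.units_eq_one_or u with rfl | rfl <;> simp

lemma sum_sign_mul_sign {Y : Type*} [Fintype Y] [DecidableEq Y] (i k : Y) :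
    ∑ s : Y → ℤˣ, ((s i : ℤ) : ℂ) * ((s k : ℤ) : ℂ) =
      if i = k then (Fintype.card (Y → ℤˣ) : ℂ) else 0 := by
  split_ifs with h
  · subst h
    simp [intUnit_mul_self_cast]
  · have key := Equiv.sum_comp (Equiv.mulLeft (Pi.mulSingle i (-1 : ℤˣ) : Y → ℤˣ))
      (fun s => ((s i : ℤ) : ℂ) * ((s k : ℤ) : ℂ))
    simp only [Equiv.coe_mulLeft, Pi.mul_apply, Pi.mulSingle_eq_same,
      Pi.mulSingle_eq_of_ne (Ne.symm h), one_mul, neg_mul, Units.val_neg, Int.cast_neg,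
      Finset.sum_neg_distrib] at key
    exact self_eq_neg.mp key.symm

open Matrix in
lemma signedShift_mul_conjTranspose {Y : Type*} [Fintype Y] [DecidableEq Y] [AddGroup Y]
    (a : Y) (s : Y → ℤˣ) : signedShift a s * (signedShift a s)ᴴ = 1 := by
  ext i k
  simp only [signedShift, mul_apply, conjTranspose_apply, of_apply, apply_ite star, star_zero,
    ite_mul, zero_mul, Finset.sum_ite_eq', Finset.mem_univ, if_true, add_left_inj, one_apply]
  split_ifs with h
  · subst h
    simp [intUnit_mul_self_cast]
  · simp

open Matrix in
lemma one_kronecker_signedShift_mul_conjTranspose {X Y : Type*} [Fintype X] [DecidableEq X]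
    [Fintype Y] [DecidableEq Y] [AddGroup Y] (a : Y) (s : Y → ℤˣ) :
    ((1 : Matrix X X ℂ) ⊗ₖ signedShift a s) * ((1 : Matrix X X ℂ) ⊗ₖ signedShift a s)ᴴ = 1 := by
  rw [conjTranspose_kronecker, ← mul_kronecker_mul, signedShift_mul_conjTranspose]
  simp

open Matrix in
lemma conj_one_kronecker_signedShift_apply {X Y : Type*} [Fintype X] [DecidableEq X]
    [Fintype Y] [DecidableEq Y] [AddGroup Y] (B : Matrix (X × Y) (X × Y) ℂ)
    (a : Y) (s : Y → ℤˣ) (p q : X × Y) :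
    (((1 : Matrix X X ℂ) ⊗ₖ signedShift a s) * B *
      ((1 : Matrix X X ℂ) ⊗ₖ signedShift a s)ᴴ) p q =
      ((s p.2 : ℤ) : ℂ) * ((s q.2 : ℤ) : ℂ) * B (p.1, p.2 + a) (q.1, q.2 + a) := by
  obtain ⟨x, i⟩ := p
  obtain ⟨x', k⟩ := q
  simp [signedShift, mul_apply, one_apply, Fintype.sum_prod_type, ite_mul, apply_ite]
  ring

/-- Averaging over all signed shifts implements the normalized partial trace. -/
lemma sum_conj_signedShift {dX dY : ℕ} [NeZero dY]
    (B : Matrix (Fin dX × Fin dY) (Fin dX × Fin dY) ℂ) :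
    ∑ u : Fin dY × (Fin dY → ℤˣ),
      ((1 : Matrix (Fin dX) (Fin dX) ℂ) ⊗ₖ signedShift u.1 u.2) * B *
        ((1 : Matrix (Fin dX) (Fin dX) ℂ) ⊗ₖ signedShift u.1 u.2).conjTranspose =
      (Fintype.card (Fin dY × (Fin dY → ℤˣ)) : ℂ) •
        (ptrY B ⊗ₖ (1 : Matrix (Fin dY) (Fin dY) ℂ)) := by
  ext ⟨x, i⟩ ⟨x', k⟩
  have hd : (dY : ℂ) ≠ 0 := Nat.cast_ne_zero.mpr (NeZero.ne dY)
  simp only [Matrix.sum_apply, conj_one_kronecker_signedShift_apply, Fintype.sum_prod_type,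
    ← Finset.sum_mul, sum_sign_mul_sign, Matrix.smul_apply, Matrix.kroneckerMap_apply, ptrY,
    Matrix.one_apply, smul_eq_mul, ← Finset.mul_sum]
  split_ifs with h
  · subst h
    have hshift : ∑ a, B (x, i + a) (x', i + a) = ∑ y, B (x, y) (x', y) :=
      Equiv.sum_comp (Equiv.addLeft i) (fun y => B (x, y) (x', y))
    rw [hshift, Fintype.card_prod, Fintype.card_fin]
    push_cast
    field_simp
  · simp

lemma norm_le_one_of_mul_star_self {ι : Type*} [Fintype ι] [DecidableEq ι] {A : Matrix ι ι ℂ}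
    (h : A * A.conjTranspose = 1) : ‖A‖ ≤ 1 := by
  have h1 : ‖(1 : Matrix ι ι ℂ)‖ ≤ 1 := by
    rw [Matrix.cstar_norm_def, map_one]
    exact ContinuousLinearMap.norm_id_le
  have h2 : ‖A * star A‖ = ‖A‖ * ‖A‖ := CStarRing.norm_self_mul_star
  rw [Matrix.star_eq_conjTranspose, h] at h2
  nlinarith [norm_nonneg A]

/-- The commutators of `B` with `1 ⊗ O`, for contractions `O`, are uniformly bounded. -/
lemma bddAbove_commutator_norms {dX dY : ℕ}
    (B : Matrix (Fin dX × Fin dY) (Fin dX × Fin dY) ℂ) :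
    BddAbove {r : ℝ | ∃ O : Matrix (Fin dY) (Fin dY) ℂ, opNorm O ≤ 1 ∧
      r = opNorm (B * ((1 : Matrix (Fin dX) (Fin dX) ℂ) ⊗ₖ O) -
        ((1 : Matrix (Fin dX) (Fin dX) ℂ) ⊗ₖ O) * B)} := by
  let K : Matrix (Fin dY) (Fin dY) ℂ →ₗ[ℂ] Matrix (Fin dX × Fin dY) (Fin dX × Fin dY) ℂ :=
    Matrix.kroneckerBilinear (R := ℂ) (1 : Matrix (Fin dX) (Fin dX) ℂ)
  let f := LinearMap.toContinuousLinearMap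
    ((LinearMap.mulLeft ℂ B - LinearMap.mulRight ℂ B) ∘ₗ K)
  refine ⟨‖f‖, ?_⟩
  rintro r ⟨O, hO, rfl⟩
  exact (f.le_opNorm O).trans (mul_le_of_le_one_right (norm_nonneg f) hO)

/-- `‖B − (tr_Y B) ⊗ 1‖` is bounded by the supremum of `‖[B, 1 ⊗ O]‖` over contractions `O`. -/
theorem partial_trace_approx {dX dY : ℕ}
    (B : Matrix (Fin dX × Fin dY) (Fin dX × Fin dY) ℂ) :
    opNorm (B - ptrY B ⊗ₖ (1 : Matrix (Fin dY) (Fin dY) ℂ)) ≤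
      sSup {r : ℝ | ∃ O : Matrix (Fin dY) (Fin dY) ℂ, opNorm O ≤ 1 ∧
        r = opNorm (B * ((1 : Matrix (Fin dX) (Fin dX) ℂ) ⊗ₖ O) -
              ((1 : Matrix (Fin dX) (Fin dX) ℂ) ⊗ₖ O) * B)} := by
  rcases Nat.eq_zero_or_pos dY with rfl | hd
  · rw [Subsingleton.elim (B - _) 0]
    refine le_of_eq_of_le (by simp [opNorm]) (Real.sSup_nonneg ?_)
    rintro r ⟨O, -, rfl⟩
    exact norm_nonneg _
  have : NeZero dY := ⟨hd.ne'⟩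
  set S := {r : ℝ | ∃ O : Matrix (Fin dY) (Fin dY) ℂ, opNorm O ≤ 1 ∧
    r = opNorm (B * ((1 : Matrix (Fin dX) (Fin dX) ℂ) ⊗ₖ O) -
      ((1 : Matrix (Fin dX) (Fin dX) ℂ) ⊗ₖ O) * B)}
  let V (u : Fin dY × (Fin dY → ℤˣ)) : Matrix (Fin dX × Fin dY) (Fin dX × Fin dY) ℂ :=
    (1 : Matrix (Fin dX) (Fin dX) ℂ) ⊗ₖ signedShift u.1 u.2
  set N := Fintype.card (Fin dY × (Fin dY → ℤˣ))
  have hNpos : (0 : ℝ) < N := Nat.cast_pos.mpr Fintype.card_pos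
  have hVV (u) : V u * (V u).conjTranspose = 1 :=
    one_kronecker_signedShift_mul_conjTranspose u.1 u.2
  have hterm (u) : ‖(B * V u - V u * B) * (V u).conjTranspose‖ ≤ sSup S := by
    refine (norm_mul_le _ _).trans ?_
    rw [Matrix.l2_opNorm_conjTranspose]
    refine (mul_le_of_le_one_right (norm_nonneg _)
      (norm_le_one_of_mul_star_self (hVV u))).trans ?_
    exact le_csSup (bddAbove_commutator_norms B) ⟨signedShift u.1 u.2,
      norm_le_one_of_mul_star_self (signedShift_mul_conjTranspose u.1 u.2), rfl⟩
  have hsum : (N : ℂ) • (B - ptrY B ⊗ₖ (1 : Matrix (Fin dY) (Fin dY) ℂ)) =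
      ∑ u, (B * V u - V u * B) * (V u).conjTranspose := by
    simp only [sub_mul, Matrix.mul_assoc B, hVV, Matrix.mul_one, Finset.sum_sub_distrib]
    rw [sum_conj_signedShift, smul_sub, Finset.sum_const, Finset.card_univ, Nat.cast_smul_eq_nsmul]
  have hle : (N : ℝ) * ‖B - ptrY B ⊗ₖ (1 : Matrix (Fin dY) (Fin dY) ℂ)‖ ≤ N * sSup S := by
    calc _ = ‖(N : ℂ) • (B - ptrY B ⊗ₖ (1 : Matrix (Fin dY) (Fin dY) ℂ))‖ := by
          rw [norm_smul, Complex.norm_natCast]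
      _ ≤ N * sSup S := by
          rw [hsum]
          refine (norm_sum_le_of_le _ fun u _ => hterm u).trans_eq ?_
          rw [Finset.sum_const, Finset.card_univ, nsmul_eq_mul]
  exact le_of_mul_le_mul_left hle hNpos
end

section
/- Let R ≥ 1 and n ≥ 1 be integers, δ > 0 and i ∈ ℤ; let Λ = [i−2nR+1, i+nR−1] ∩ ℤ and let h = (h_l)_{l∈Λ} be distributed according to the product of uniform measures on [0,1]^Λ. Then the probability that there exist m ∈ {1,…,n} and j ∈ [i−2nR+1, i] such that the interval S_j^{(m)} is resonant is at most 2nR · Σ_{m=1}^n 3^{mR} δ, which in turn is at most 4nR · 3^{nR} δ. -/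
open MeasureTheory

/-- The interval `S_j^{(m)} = [j, j+mR−1]` is resonant for the fields `(h_l)` (given on the
window `Λ`, which contains it) if some nonzero `η ∈ {−1,0,1}^{S_j^{(m)}}` makes
`|Σ_{l∈S_j^{(m)}} η_l h_l| < δ`. -/
def Resonant (R : ℕ) (δ : ℝ) (Λ : Finset ℤ) (h : ↥Λ → ℝ) (j : ℤ) (m : ℕ) : Prop :=
  ∃ η : ℤ → ℝ, (∀ l, η l = -1 ∨ η l = 0 ∨ η l = 1) ∧
    (∃ l ∈ Finset.Icc j (j + (m * R : ℕ) - 1), η l ≠ 0) ∧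
    |∑ l : ↥Λ, (if (l : ℤ) ∈ Finset.Icc j (j + (m * R : ℕ) - 1) then η l * h l else 0)| < δ

/-- A linear form with some coefficient of modulus one takes values in `(-δ, δ)` with probability
at most `2δ` under the uniform measure on the unit cube. -/
lemma measure_abs_sum_mul_lt_le {ι : Type*} [Fintype ι] [DecidableEq ι] (c : ι → ℝ) (k : ι)
    (hk : |c k| = 1) (δ : ℝ) :
    Measure.pi (fun _ : ι => volume.restrict (Set.Icc (0 : ℝ) 1))
      {h : ι → ℝ | |∑ l, c l * h l| < δ} ≤ ENNReal.ofReal (2 * δ) := by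
  set μ : ι → Measure ℝ := fun _ => volume.restrict (Set.Icc (0 : ℝ) 1) with hμ
  have : ∀ l, IsProbabilityMeasure (μ l) := fun l => ⟨by simp [hμ]⟩
  set s : Set (ι → ℝ) := {h : ι → ℝ | |∑ l, c l * h l| < δ} with hs
  have hsm : MeasurableSet s := measurableSet_lt (by fun_prop) measurable_const
  have hf : Measurable (s.indicator (1 : (ι → ℝ) → ENNReal)) := measurable_one.indicator hsm
  have hslice (x : ι → ℝ) :
      ∫⁻ t, s.indicator (1 : (ι → ℝ) → ENNReal) (Function.update x k t) ∂μ k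
        ≤ ENNReal.ofReal (2 * δ) := by
    set a := ∑ l ∈ Finset.univ.erase k, c l * x l with ha
    have hsum (t : ℝ) : ∑ l, c l * Function.update x k t l = c k * t + a := by
      rw [← Finset.add_sum_erase _ _ (Finset.mem_univ k), Function.update_self, ha]
      congr 1
      refine Finset.sum_congr rfl fun l hl => ?_
      rw [Function.update_of_ne (Finset.ne_of_mem_erase hl)]
    have hpre : Function.update x k ⁻¹' s ⊆ Metric.ball (-(c k * a)) δ := by
      intro t ht
      have ht' : |c k * t + a| < δ := by simpa [hs, hsum] using ht
      have hsq : c k * c k = 1 := by rw [← abs_mul_abs_self, hk, one_mul]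
      rw [Metric.mem_ball, Real.dist_eq]
      calc |t - -(c k * a)| = |c k * (c k * t + a)| := by
            congr 1; linear_combination (-t) * hsq
        _ < δ := by rwa [abs_mul, hk, one_mul]
    calc ∫⁻ t, s.indicator (1 : (ι → ℝ) → ENNReal) (Function.update x k t) ∂μ k
        = ∫⁻ t, (Function.update x k ⁻¹' s).indicator 1 t ∂μ k := rfl
      _ = μ k (Function.update x k ⁻¹' s) :=
          lintegral_indicator_one (hsm.preimage (measurable_update x))
      _ ≤ volume (Metric.ball (-(c k * a)) δ) :=
          (measure_mono hpre).trans (Measure.restrict_apply_le _ _)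
      _ = ENNReal.ofReal (2 * δ) := Real.volume_ball _ _
  rw [← lintegral_indicator_one hsm, lintegral_eq_lmarginal_univ 0,
    lmarginal_erase' _ hf (Finset.mem_univ k)]
  calc _ ≤ (∫⋯∫⁻_Finset.univ.erase k, (fun _ => ENNReal.ofReal (2 * δ)) ∂μ) 0 :=
        lmarginal_mono hslice 0
    _ = ENNReal.ofReal (2 * δ) := by
        rw [lmarginal, lintegral_const, Measure.pi_univ]
        simp [hμ]

/-- Among the sign patterns, one can select at most half so that every nonzero pattern is
selected up to a global sign. -/
lemma exists_half_signPatterns (α : Type*) [Fintype α] :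
    ∃ T : Finset (α → SignType), 2 * T.card ≤ 3 ^ Fintype.card α ∧ (∀ σ ∈ T, σ ≠ 0) ∧
      ∀ σ : α → SignType, σ ≠ 0 → σ ∈ T ∨ -σ ∈ T := by
  classical
  let e := Fintype.equivFin (α → SignType)
  have hneg (σ : α → SignType) (h : σ = -σ) : σ = 0 := by
    funext a
    have := congrFun h a
    simp only [Pi.neg_apply] at this
    simp only [Pi.zero_apply]
    revert this
    generalize σ a = s
    revert s
    decide
  refine ⟨Finset.univ.filter fun σ => e σ < e (-σ), ?_, ?_, ?_⟩
  · set T := Finset.univ.filter fun σ => e σ < e (-σ) with hT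
    have hdisj : Disjoint T (T.image fun σ => -σ) := by
      rw [Finset.disjoint_left]
      intro σ hσ hσ'
      obtain ⟨τ, hτ, rfl⟩ := Finset.mem_image.1 hσ'
      simp only [hT, Finset.mem_filter, Finset.mem_univ, true_and, neg_neg] at hσ hτ
      exact lt_asymm hσ hτ
    have hcard : (T.image fun σ => -σ).card = T.card :=
      Finset.card_image_of_injective _ neg_injective
    have hle := Finset.card_le_univ (T ∪ T.image fun σ => -σ)
    rw [Finset.card_union_of_disjoint hdisj, hcard, Fintype.card_fun] at hle
    have : Fintype.card SignType = 3 := rfl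
    rw [this] at hle
    omega
  · rintro σ hσ rfl
    simp at hσ
  · intro σ hσ
    have hne : e σ ≠ e (-σ) := fun h => hσ (hneg σ (e.injective h))
    simpa using lt_or_gt_of_ne hne

/-- Each single interval of length `mR` inside the window is resonant with probability at most
`3^{mR} δ`. -/
lemma measure_resonant_le (R : ℕ) (δ : ℝ) (Λ : Finset ℤ) (j : ℤ) (m : ℕ)
    (hsub : Finset.Icc j (j + (m * R : ℕ) - 1) ⊆ Λ) :
    Measure.pi (fun _ : ↥Λ => volume.restrict (Set.Icc (0 : ℝ) 1))
      {h : ↥Λ → ℝ | Resonant R δ Λ h j m} ≤ ENNReal.ofReal (3 ^ (m * R) * δ) := by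
  classical
  unfold Resonant
  have hIcard : (Finset.Icc j (j + (m * R : ℕ) - 1)).card = m * R := by
    rw [Int.card_Icc]; omega
  generalize Finset.Icc j (j + (m * R : ℕ) - 1) = I at hsub hIcard ⊢
  obtain ⟨T, hTcard, hT0, hT⟩ := exists_half_signPatterns I
  rw [Fintype.card_coe, hIcard] at hTcard
  let c : (I → SignType) → Λ → ℝ := fun σ l => if hl : (l : ℤ) ∈ I then (σ ⟨l, hl⟩ : ℝ) else 0
  have hcneg (σ : I → SignType) (h : Λ → ℝ) :
      ∑ l, c (-σ) l * h l = -∑ l, c σ l * h l := by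
    rw [← Finset.sum_neg_distrib]
    refine Finset.sum_congr rfl fun l _ => ?_
    by_cases hl : (l : ℤ) ∈ I <;> simp [c, hl]
  have hcover : {h : ↥Λ → ℝ | ∃ η : ℤ → ℝ, (∀ l, η l = -1 ∨ η l = 0 ∨ η l = 1) ∧
      (∃ l ∈ I, η l ≠ 0) ∧ |∑ l : ↥Λ, (if (l : ℤ) ∈ I then η l * h l else 0)| < δ} ⊆
      ⋃ σ ∈ T, {h : ↥Λ → ℝ | |∑ l, c σ l * h l| < δ} := by
    rintro h ⟨η, hη, ⟨l₀, hl₀, hne⟩, hlt⟩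
    let σ : I → SignType := fun l => SignType.sign (η l)
    have hσ : σ ≠ 0 := fun h0 => hne (by simpa [σ] using congrFun h0 ⟨l₀, hl₀⟩)
    have hsum : |∑ l, c σ l * h l| < δ := by
      convert hlt using 3 with l
      by_cases hl : (l : ℤ) ∈ I
      · rcases hη l with h' | h' | h' <;> simp [c, σ, hl, h']
      · simp [c, hl]
    simp only [Set.mem_iUnion, Set.mem_ofPred_eq, exists_prop]
    rcases hT σ hσ with h' | h'
    · exact ⟨σ, h', hsum⟩
    · exact ⟨-σ, h', by rwa [hcneg, abs_neg]⟩
  have hterm (σ : I → SignType) (hσ : σ ∈ T) :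
      Measure.pi (fun _ : ↥Λ => volume.restrict (Set.Icc (0 : ℝ) 1))
        {h : ↥Λ → ℝ | |∑ l, c σ l * h l| < δ} ≤ ENNReal.ofReal (2 * δ) := by
    obtain ⟨k, hk⟩ := Function.ne_iff.1 (hT0 σ hσ)
    refine measure_abs_sum_mul_lt_le (c σ) ⟨k, hsub k.2⟩ ?_ δ
    simp only [c, k.2, dif_pos, Subtype.coe_eta]
    rw [Pi.zero_apply] at hk
    revert hk
    cases σ k <;> simp
  calc _ ≤ ∑ σ ∈ T, Measure.pi (fun _ : ↥Λ => volume.restrict (Set.Icc (0 : ℝ) 1))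
        {h : ↥Λ → ℝ | |∑ l, c σ l * h l| < δ} :=
        (measure_mono hcover).trans (measure_biUnion_finset_le _ _)
    _ ≤ ∑ _σ ∈ T, ENNReal.ofReal (2 * δ) := Finset.sum_le_sum hterm
    _ = ENNReal.ofReal ((2 * T.card : ℕ) * δ) := by
        rw [Finset.sum_const, nsmul_eq_mul, ← ENNReal.ofReal_natCast,
          ← ENNReal.ofReal_mul (Nat.cast_nonneg _)]
        congr 1; push_cast; ring
    _ ≤ ENNReal.ofReal (3 ^ (m * R) * δ) := by
        rcases le_or_gt δ 0 with hδ | hδ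
        · rw [ENNReal.ofReal_of_nonpos (mul_nonpos_of_nonneg_of_nonpos (Nat.cast_nonneg _) hδ)]
          exact zero_le
        · gcongr
          exact_mod_cast hTcard

lemma sum_three_pow_mul_le (R n : ℕ) (hR : 1 ≤ R) :
    ∑ m ∈ Finset.Icc 1 n, (3 : ℝ) ^ (m * R) ≤ 2 * 3 ^ (n * R) := by
  induction n with
  | zero => simp
  | succ n ih =>
    rw [Finset.sum_Icc_succ_top (by omega)]
    have h3 : (3 : ℝ) ≤ 3 ^ R := le_self_pow₀ (by norm_num) (by omega)
    have hpos : (0 : ℝ) < 3 ^ (n * R) := by positivity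
    have hsucc : (3 : ℝ) ^ ((n + 1) * R) = 3 ^ (n * R) * 3 ^ R := by rw [add_mul, one_mul, pow_add]
    rw [hsucc]
    nlinarith

/-- The probability that some interval `S_j^{(m)}`, `1 ≤ m ≤ n`, `j ∈ [i−2nR+1, i]`, is
resonant is at most `2nR · Σ_{m=1}^n 3^{mR} δ`, which is at most `4nR · 3^{nR} δ`. -/
theorem prob_resonant_interval (R n : ℕ) (hR : 1 ≤ R) (hn : 1 ≤ n) (δ : ℝ) (hδ : 0 < δ)
    (i : ℤ) (Λ : Finset ℤ)
    (hΛ : Λ = Finset.Icc (i - 2 * n * R + 1) (i + n * R - 1)) :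
    Measure.pi (fun _ : ↥Λ => volume.restrict (Set.Icc (0 : ℝ) 1))
        {h : ↥Λ → ℝ | ∃ m : ℕ, 1 ≤ m ∧ m ≤ n ∧
          ∃ j : ℤ, i - 2 * n * R + 1 ≤ j ∧ j ≤ i ∧ Resonant R δ Λ h j m}
      ≤ ENNReal.ofReal (2 * n * R * ∑ m ∈ Finset.Icc 1 n, (3 : ℝ) ^ (m * R) * δ) ∧
    2 * (n : ℝ) * R * ∑ m ∈ Finset.Icc 1 n, (3 : ℝ) ^ (m * R) * δ
      ≤ 4 * n * R * (3 : ℝ) ^ (n * R) * δ := by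
  constructor
  · set J := Finset.Icc (i - 2 * n * R + 1) i with hJ
    have hJcard : J.card = 2 * n * R := by
      rw [hJ, Int.card_Icc]
      zify
      rw [Int.toNat_of_nonneg (by ring_nf; positivity)]
      ring
    have hcover : {h : ↥Λ → ℝ | ∃ m : ℕ, 1 ≤ m ∧ m ≤ n ∧
          ∃ j : ℤ, i - 2 * n * R + 1 ≤ j ∧ j ≤ i ∧ Resonant R δ Λ h j m} ⊆
        ⋃ m ∈ Finset.Icc 1 n, ⋃ j ∈ J, {h : ↥Λ → ℝ | Resonant R δ Λ h j m} := by
      rintro h ⟨m, h1, h2, j, h3, h4, hres⟩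
      simp only [Set.mem_iUnion, Set.mem_ofPred_eq, exists_prop]
      exact ⟨m, Finset.mem_Icc.2 ⟨h1, h2⟩, j, Finset.mem_Icc.2 ⟨h3, h4⟩, hres⟩
    have hterm (m : ℕ) (hm : m ∈ Finset.Icc 1 n) (j : ℤ) (hj : j ∈ J) :
        Measure.pi (fun _ : ↥Λ => volume.restrict (Set.Icc (0 : ℝ) 1))
          {h : ↥Λ → ℝ | Resonant R δ Λ h j m} ≤ ENNReal.ofReal (3 ^ (m * R) * δ) := by
      refine measure_resonant_le R δ Λ j m ?_
      rw [Finset.mem_Icc] at hm hj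
      have hmn : ((m * R : ℕ) : ℤ) ≤ n * R := by exact_mod_cast Nat.mul_le_mul_right R hm.2
      rw [hΛ]
      exact Finset.Icc_subset_Icc hj.1 (by linarith [hj.2])
    calc _ ≤ ∑ m ∈ Finset.Icc 1 n, ∑ j ∈ J,
          Measure.pi (fun _ : ↥Λ => volume.restrict (Set.Icc (0 : ℝ) 1))
            {h : ↥Λ → ℝ | Resonant R δ Λ h j m} :=
          (measure_mono hcover).trans <| (measure_biUnion_finset_le _ _).trans <|
            Finset.sum_le_sum fun m _ => measure_biUnion_finset_le _ _
      _ ≤ ∑ m ∈ Finset.Icc 1 n, ∑ _j ∈ J, ENNReal.ofReal (3 ^ (m * R) * δ) :=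
          Finset.sum_le_sum fun m hm => Finset.sum_le_sum fun j hj => hterm m hm j hj
      _ = ENNReal.ofReal (2 * n * R * ∑ m ∈ Finset.Icc 1 n, (3 : ℝ) ^ (m * R) * δ) := by
          simp only [Finset.sum_const, hJcard, nsmul_eq_mul]
          rw [← Finset.mul_sum, ENNReal.ofReal_mul (by positivity),
            ENNReal.ofReal_sum_of_nonneg fun m _ => by positivity, ← ENNReal.ofReal_natCast]
          push_cast
          rfl
  · rw [← Finset.sum_mul]
    calc 2 * (n : ℝ) * R * ((∑ m ∈ Finset.Icc 1 n, (3 : ℝ) ^ (m * R)) * δ)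
        ≤ 2 * (n : ℝ) * R * ((2 * 3 ^ (n * R)) * δ) := by
          gcongr
          exact sum_three_pow_mul_le R n hR
      _ = 4 * n * R * (3 : ℝ) ^ (n * R) * δ := by ring
end

section
/- Let (T_α)_{α∈A} be a finite family of pairwise disjoint nonempty finite intervals in ℤ, let κ > 0, M > 0 and i ∈ ℤ, and set Q(i) = Σ_α |T_α| e^{−κ·dist(i,T_α)}. If Q(i) > M, then there exists α such that |T_α| e^{−κ·dist(i,T_α)/2} ≥ (M/2)(1 − e^{−κ/2}). -/
/-- The distance from a point `i ∈ ℤ` to a (nonempty) finite set `T ⊂ ℤ`. -/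
noncomputable def distToSet (i : ℤ) (T : Finset ℤ) : ℝ :=
  sInf ((fun j : ℤ => |(i : ℝ) - (j : ℝ)|) '' ↑T)

/-- The distance to a nonempty finite set of integers is attained. -/
lemma exists_mem_distToSet_eq (i : ℤ) {T : Finset ℤ} (hT : T.Nonempty) :
    ∃ j ∈ T, distToSet i T = ((i - j).natAbs : ℝ) := by
  have hmem : distToSet i T ∈ (fun j : ℤ => |(i : ℝ) - (j : ℝ)|) '' (T : Set ℤ) :=
    Set.Nonempty.csInf_mem (hT.to_set.image _) (T.finite_toSet.image _)
  obtain ⟨j, hj, h⟩ := hmem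
  refine ⟨j, hj, ?_⟩
  rw [← h, Nat.cast_natAbs]
  push_cast
  rfl

/-- A sum of distinct powers of `r ∈ [0, 1)` is at most the sum of the geometric series. -/
lemma sum_pow_le_of_injOn {ι : Type*} {s : Finset ι} {f : ι → ℕ} (hf : Set.InjOn f s)
    {r : ℝ} (hr0 : 0 ≤ r) (hr1 : r < 1) :
    ∑ x ∈ s, r ^ f x ≤ (1 - r)⁻¹ := by
  classical
  rw [← Finset.sum_image (f := fun n => r ^ n) hf, ← tsum_geometric_of_lt_one hr0 hr1]
  exact (summable_geometric_of_lt_one hr0 hr1).sum_le_tsum _ fun n _ => pow_nonneg hr0 n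

/-- A two-sided geometric sum over distinct integers is at most `2 / (1 - r)`. -/
lemma sum_pow_natAbs_sub_le {ι : Type*} {s : Finset ι} {p : ι → ℤ} (hp : Set.InjOn p s)
    (i : ℤ) {r : ℝ} (hr0 : 0 ≤ r) (hr1 : r < 1) :
    ∑ x ∈ s, r ^ (i - p x).natAbs ≤ 2 * (1 - r)⁻¹ := by
  rw [← Finset.sum_filter_add_sum_filter_not s (fun x => p x ≤ i), two_mul]
  refine add_le_add (sum_pow_le_of_injOn ?_ hr0 hr1) (sum_pow_le_of_injOn ?_ hr0 hr1)
  all_goals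
    intro x hx y hy hxy
    simp only [Finset.coe_filter, Set.mem_ofPred_eq] at hx hy
    exact hp hx.1 hy.1 (by dsimp only at hxy; omega)

/-- If `Q(i) = Σ_α |T_α| e^{−κ·dist(i,T_α)} > M` for a disjoint family of nonempty finite
intervals, then some `α` satisfies `|T_α| e^{−κ·dist(i,T_α)/2} ≥ (M/2)(1−e^{−κ/2})`. -/
theorem exists_large_interval {A : Type*} [Fintype A] (T : A → Finset ℤ)
    (hne : ∀ α, (T α).Nonempty) (hint : ∀ α, ∃ a b : ℤ, T α = Finset.Icc a b)
    (hdisj : ∀ α α', α ≠ α' → Disjoint (T α) (T α'))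
    (κ M : ℝ) (hκ : 0 < κ) (hM : 0 < M) (i : ℤ)
    (hQ : M < ∑ α, ((T α).card : ℝ) * Real.exp (-κ * distToSet i (T α))) :
    ∃ α, (M / 2) * (1 - Real.exp (-κ / 2))
        ≤ ((T α).card : ℝ) * Real.exp (-κ * distToSet i (T α) / 2) := by
  by_contra! hsmall
  choose p hpT hp using fun α => exists_mem_distToSet_eq i (hne α)
  have hinj : Function.Injective p := by
    intro α β h
    by_contra hαβ
    exact Finset.disjoint_left.mp (hdisj α β hαβ) (hpT α) (h ▸ hpT β)
  set r := Real.exp (-κ / 2) with hr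
  have hr0 : 0 ≤ r := (Real.exp_pos _).le
  have hr1 : r < 1 := Real.exp_lt_one_iff.mpr (by linarith)
  have hpow (α : A) : Real.exp (-κ * distToSet i (T α) / 2) = r ^ (i - p α).natAbs := by
    rw [hr, ← Real.exp_nat_mul, hp α]
    ring_nf
  have hbound : ∑ α, ((T α).card : ℝ) * Real.exp (-κ * distToSet i (T α)) ≤ M :=
    calc ∑ α, ((T α).card : ℝ) * Real.exp (-κ * distToSet i (T α))
        ≤ ∑ α, M / 2 * (1 - r) * r ^ (i - p α).natAbs := by
          refine Finset.sum_le_sum fun α _ => ?_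
          rw [← add_halves (-κ * distToSet i (T α)), Real.exp_add, ← mul_assoc, ← hpow]
          exact mul_le_mul_of_nonneg_right (hsmall α).le (Real.exp_pos _).le
      _ = M / 2 * (1 - r) * ∑ α, r ^ (i - p α).natAbs := by rw [Finset.mul_sum]
      _ ≤ M / 2 * (1 - r) * (2 * (1 - r)⁻¹) :=
          mul_le_mul_of_nonneg_left (sum_pow_natAbs_sub_le hinj.injOn i hr0 hr1)
            (mul_nonneg (by linarith) (by linarith))
      _ = M := by
          have : 1 - r ≠ 0 := (sub_pos.mpr hr1).ne'
          field_simp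
  exact hQ.not_ge hbound
end
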